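/- arXiv:math/0306218 — 2 statements merged into one kernel-verified Lean document; each statement's English description precedes it below -/
import Mathlib

section
/- Suppose there is K > 0 with Q_j ≥ j − K for all j ≥ 1, and Q_j > (j − 1/2)·θ/π for all j ≥ 1. Then there exists N_0 such that for every integer N ≥ N_0 the sequence X̲ defined by X̲_k := N^{k − N²} for 1 ≤ k < N² and X̲_k := (k − N² + N)^{α_θ} for k ≥ N² satisfies φ_j(X̲, X̲) ≤ Q_j for all j ≥ 1. -/
open Filter Asymptotics MeasureTheory
open scoped ENNReal Topology

/-- `Theta θ E' E` is the argument of the complex number `E' + E·e^{iθ}`;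
for `0 < θ < π` and `E', E > 0` it lies in `(0, θ)` and equals
`arctan (sin θ / (E'/E + cos θ))` with the branch taken in `(0, θ)`. -/
noncomputable def Theta (θ E' E : ℝ) : ℝ :=
  Complex.arg ((E' : ℂ) + (E : ℂ) * Complex.exp (θ * Complex.I))

/-- `phi θ X Y j = (1/π) · ∑_{k ≥ 1} Θ(X_k, Y_j) ∈ (0, ∞]`, where sequences are
indexed by `ℕ` and only the values at indices `k ≥ 1` are used. -/
noncomputable def phi (θ : ℝ) (X Y : ℕ → ℝ) (j : ℕ) : ℝ≥0∞ :=
  ENNReal.ofReal (1 / Real.pi) * ∑' k : ℕ, ENNReal.ofReal (Theta θ (X (k + 1)) (Y j))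

/-- `Pker θ E E' = E·E' / (E² + 2·cos θ·E·E' + E'²)`. -/
noncomputable def Pker (θ E E' : ℝ) : ℝ :=
  E * E' / (E ^ 2 + 2 * Real.cos θ * E * E' + E' ^ 2)

/-- The drift `D_α = (1/π) ∫_0^∞ Θ(s^α, 1) ds`. -/
noncomputable def Drift (θ α : ℝ) : ℝ :=
  (1 / Real.pi) * ∫ s in Set.Ioi (0 : ℝ), Theta θ (s ^ α) 1

/-- `S_ε = ∫_0^∞ s^{-ε} / (s^{α_θ} + 2 cos θ + s^{-α_θ}) ds` with `α_θ = 1 + θ/π`. -/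
noncomputable def Sfun (θ ε : ℝ) : ℝ :=
  ∫ s in Set.Ioi (0 : ℝ), s ^ (-ε) /
    (s ^ (1 + θ / Real.pi) + 2 * Real.cos θ + s ^ (-(1 + θ / Real.pi)))

/-- The comparison sequence `X̲` of the paper: `X̲_k = N^{k - N²}` for `k < N²`
and `X̲_k = (k - N² + N)^{α_θ}` for `k ≥ N²`. -/
noncomputable def lowerSeq (θ : ℝ) (N : ℕ) (k : ℕ) : ℝ :=
  if k < N ^ 2 then (N : ℝ) ^ ((k : ℤ) - (N : ℤ) ^ 2)
  else ((k : ℝ) - (N : ℝ) ^ 2 + (N : ℝ)) ^ (1 + θ / Real.pi)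

/-!
For `0 < σ < 1` the Mellin transform `M(w) = ∫₀^∞ x ^ (σ - 1) log (1 + w / x) dx` is holomorphic on
the slit plane, and for real `w > 0` scaling gives `M(w) = w ^ σ M(1)`; by the identity theorem this
holds on the whole slit plane. Taking imaginary parts at `w = e^{iθ}`,
`∫₀^∞ x ^ (σ - 1) Θ_θ(x, 1) dx` is a constant times `sin (σ θ)`. The constant is found by letting
`θ → π`, where `Θ_θ(x, 1)` tends to `π` for `x < 1` and to `0` for `x > 1`. With `σ = 1 / α` the
drift is `sin (θ / α) / sin (π / α)`, which equals `1` exactly because `θ / α + π / α = π` when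
`α = 1 + θ / π`.

In `φ_j`, the terms with `k < j` are at most `θ / π` each and the term `k = j` is `θ / (2π)`. For
`j < N²` the remaining terms sum to `O(1 / N)` because `X̲` grows geometrically there, and this is
smaller than the gap between `Q_j` and `(j - 1/2) θ / π`, which is bounded below since `θ < π`. For
`j ≥ N²`, comparing the terms `k ≥ N²` with an integral gives at most `j - N² + N`, while the terms
`k < N²` give at most `(N² - 1) θ / π`; this saves a multiple of `N²`, which absorbs `N + K`.
-/

section Arg

open Complex

lemma arg_eq_pi_div_two_sub_arctan {z : ℂ} (hz : 0 < z.im) :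
    arg z = Real.pi / 2 - Real.arctan (z.re / z.im) := by
  have arg_pos : 0 < arg z :=
    (arg_nonneg_iff.2 hz.le).lt_of_ne' fun h ↦ hz.ne' (arg_eq_zero_iff.1 h).2
  have arg_lt : arg z < Real.pi := arg_lt_pi_iff.2 (Or.inr hz.ne')
  have tan_compl : Real.tan (Real.pi / 2 - arg z) = z.re / z.im := by
    rw [Real.tan_pi_div_two_sub, tan_arg, inv_div]
  rw [← tan_compl, Real.arctan_tan (by linarith) (by linarith)]
  ring

lemma antitone_arg_ofReal_add {w : ℂ} (hw : 0 < w.im) : Antitone fun x : ℝ ↦ arg (x + w) := by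
  intro x y hxy
  have im_add (t : ℝ) : ((t : ℂ) + w).im = w.im := by simp
  have re_add (t : ℝ) : ((t : ℂ) + w).re = t + w.re := by simp
  simp only
  rw [arg_eq_pi_div_two_sub_arctan (by rwa [im_add]),
    arg_eq_pi_div_two_sub_arctan (by rwa [im_add]), im_add, im_add, re_add, re_add]
  gcongr

lemma abs_arg_one_add_le (z : ℂ) : |arg (1 + z)| ≤ 2 * Real.pi * ‖z‖ := by
  rcases le_total ‖z‖ (1 / 2) with hz | hz
  · calc |arg (1 + z)| = |(log (1 + z)).im| := by rw [log_im]
      _ ≤ ‖log (1 + z)‖ := abs_im_le_norm _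
      _ ≤ 3 / 2 * ‖z‖ := norm_log_one_add_half_le_self hz
      _ ≤ 2 * Real.pi * ‖z‖ := by gcongr; linarith [Real.pi_gt_three]
  · calc |arg (1 + z)| ≤ Real.pi := abs_arg_le_pi _
      _ ≤ 2 * Real.pi * ‖z‖ := by nlinarith [Real.pi_pos]

end Arg

section Theta

open Complex

variable {θ x y : ℝ}

lemma Theta_le_pi (θ x y : ℝ) : Theta θ x y ≤ Real.pi := arg_le_pi _

lemma im_ofReal_mul_exp (θ y : ℝ) :
    ((y : ℂ) * exp (θ * I)).im = y * Real.sin θ := by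
  rw [im_ofReal_mul, exp_ofReal_mul_I_im]

lemma Theta_nonneg (h0 : 0 ≤ θ) (hπ : θ ≤ Real.pi) (hy : 0 ≤ y) : 0 ≤ Theta θ x y := by
  rw [Theta, arg_nonneg_iff, add_im, ofReal_im, zero_add, im_ofReal_mul_exp]
  exact mul_nonneg hy (Real.sin_nonneg_of_nonneg_of_le_pi h0 hπ)

lemma Theta_mul {c : ℝ} (hc : 0 < c) (θ x y : ℝ) : Theta θ (c * x) (c * y) = Theta θ x y := by
  rw [Theta, Theta, ofReal_mul, ofReal_mul, mul_assoc, ← mul_add,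
    arg_real_mul _ hc]

lemma antitone_Theta (h0 : 0 < θ) (hπ : θ < Real.pi) (hy : 0 < y) :
    Antitone fun x ↦ Theta θ x y :=
  antitone_arg_ofReal_add (by
    rw [im_ofReal_mul_exp]
    exact mul_pos hy (Real.sin_pos_of_pos_of_lt_pi h0 hπ))

lemma Theta_zero (h0 : 0 ≤ θ) (hπ : θ ≤ Real.pi) (hy : 0 < y) : Theta θ 0 y = θ := by
  rw [Theta, ofReal_zero, zero_add, exp_mul_I,
    arg_mul_cos_add_sin_mul_I hy ⟨by linarith [Real.pi_pos], hπ⟩]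

lemma Theta_le (h0 : 0 < θ) (hπ : θ < Real.pi) (hx : 0 ≤ x) (hy : 0 < y) : Theta θ x y ≤ θ :=
  (antitone_Theta h0 hπ hy hx).trans_eq (Theta_zero h0.le hπ.le hy)

lemma Theta_self (h0 : 0 ≤ θ) (hπ : θ < Real.pi) (hy : 0 < y) : Theta θ y y = θ / 2 := by
  set u : ℂ := exp ((θ / 2 : ℝ) * I) with hu
  have exp_eq : exp (θ * I) = u * u := by
    rw [hu, ← exp_add]
    push_cast
    ring_nf
  have two_cos_mul : ((2 * Real.cos (θ / 2) : ℝ) : ℂ) * u = 1 + u * u := by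
    rw [ofReal_mul, ofReal_cos, ofReal_ofNat, two_cos, neg_mul,
      exp_neg, ← hu, add_mul, inv_mul_cancel₀ (exp_ne_zero _), add_comm]
  have half_angle : (y : ℂ) + y * exp (θ * I) =
      ((y * (2 * Real.cos (θ / 2)) : ℝ) : ℂ) * u := by
    rw [exp_eq, ofReal_mul, mul_assoc, two_cos_mul]
    ring
  have cos_pos : 0 < Real.cos (θ / 2) := Real.cos_pos_of_mem_Ioo ⟨by linarith, by linarith⟩
  rw [Theta, half_angle, hu, exp_mul_I,
    arg_mul_cos_add_sin_mul_I (by positivity) ⟨by linarith, by linarith⟩]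

lemma Theta_le_div (θ : ℝ) (hx : 0 < x) (hy : 0 ≤ y) : Theta θ x y ≤ 2 * Real.pi * (y / x) := by
  have factor : (x : ℂ) + y * exp (θ * I) =
      x * (1 + ((y / x : ℝ) : ℂ) * exp (θ * I)) := by
    have : (x : ℂ) ≠ 0 := ofReal_ne_zero.2 hx.ne'
    push_cast
    field_simp
  rw [Theta, factor, arg_real_mul _ hx]
  refine (le_abs_self _).trans ((abs_arg_one_add_le _).trans_eq ?_)
  rw [norm_mul, norm_exp_ofReal_mul_I, mul_one, Complex.norm_of_nonneg (by positivity)]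

lemma Theta_one_le (θ : ℝ) (hx : 0 < x) : Theta θ x 1 ≤ 4 * Real.pi * (1 + x)⁻¹ := by
  have pi_pos := Real.pi_pos
  rw [← div_eq_mul_inv, le_div_iff₀ (by positivity)]
  rcases le_total x 1 with h | h
  · nlinarith [Theta_le_pi θ x 1]
  · have decay : Theta θ x 1 * x ≤ 2 * Real.pi := by
      simpa only [mul_one_div, le_div_iff₀ hx] using Theta_le_div θ hx zero_le_one
    nlinarith

end Theta

section LogMellin

open Complex

variable {s w : ℂ} {x : ℝ}

lemma ofReal_add_mem_slitPlane (hx : 0 ≤ x) (hw : w ∈ slitPlane) : (x : ℂ) + w ∈ slitPlane := by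
  rw [mem_slitPlane_iff] at hw ⊢
  simp only [add_re, add_im, ofReal_re, ofReal_im, zero_add]
  exact hw.imp_left (add_pos_of_nonneg_of_pos hx)

lemma one_add_div_mem_slitPlane (hx : 0 < x) (hw : w ∈ slitPlane) : 1 + w / x ∈ slitPlane := by
  rw [mem_slitPlane_iff] at hw ⊢
  simp only [add_re, add_im, one_re, one_im, zero_add, div_ofReal_re, div_ofReal_im]
  exact hw.imp (fun h ↦ by positivity) fun h ↦ div_ne_zero h hx.ne'

-- `x + z` is `1 + x` times a point of the segment joining `1` and `z`.
lemma exists_eventually_mul_one_add_le_norm (hw : w ∈ slitPlane) :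
    ∃ c > 0, ∀ᶠ z in 𝓝 w, ∀ x : ℝ, 0 ≤ x → c * (1 + x) ≤ ‖(x : ℂ) + z‖ := by
  let segmentNorm (z : ℂ) (t : ℝ) : ℝ := ‖t • (1 : ℂ) + (1 - t) • z‖
  have continuous_segmentNorm : Continuous fun p : ℂ × ℝ ↦ segmentNorm p.1 p.2 := by
    simp only [segmentNorm]; fun_prop
  obtain ⟨t₀, ht₀, le_segmentNorm⟩ := isCompact_Icc.exists_isMinOn
    (Set.nonempty_Icc.2 zero_le_one)
    (f := segmentNorm w) (by simp only [segmentNorm]; fun_prop : Continuous _).continuousOn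
  have segmentNorm_pos : 0 < segmentNorm w t₀ := norm_pos_iff.2 <| slitPlane_ne_zero <|
    starConvex_one_slitPlane hw ht₀.1 (sub_nonneg.2 ht₀.2) (add_sub_cancel _ _)
  refine ⟨segmentNorm w t₀ / 2, half_pos segmentNorm_pos, ?_⟩
  have near : ∀ᶠ z in 𝓝 w, ∀ t ∈ Set.Icc (0 : ℝ) 1, segmentNorm w t₀ / 2 < segmentNorm z t :=
    isCompact_Icc.eventually_forall_of_forall_eventually fun t ht ↦
      continuous_segmentNorm.continuousAt.eventually_const_lt
        ((half_lt_self segmentNorm_pos).trans_le (le_segmentNorm ht))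
  filter_upwards [near] with z hz x hx
  have hx1 : 0 < 1 + x := by positivity
  have factor : (x : ℂ) + z =
      (1 + x) • ((x / (1 + x)) • (1 : ℂ) + (1 - x / (1 + x)) • z) := by
    have : (1 + x : ℂ) ≠ 0 := by exact_mod_cast hx1.ne'
    simp only [real_smul]
    push_cast
    field_simp
    ring
  rw [factor, norm_smul, Real.norm_of_nonneg hx1.le, mul_comm]
  gcongr
  exact (hz _ ⟨by positivity, div_le_one_of_le₀ (by linarith) hx1.le⟩).le

lemma integrableOn_rpow_mul_inv_one_add {σ : ℝ} (h0 : 0 < σ) (h1 : σ < 1) :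
    IntegrableOn (fun x : ℝ ↦ x ^ (σ - 1) * (1 + x)⁻¹) (Set.Ioi 0) := by
  have cont : ContinuousOn (fun x : ℝ ↦ (1 + x)⁻¹) (Set.Ici 0) :=
    ContinuousOn.inv₀ (by fun_prop) fun x (hx : 0 ≤ x) ↦ by positivity
  refine mellin_convergent_of_isBigO_scalar (a := 1) (b := 0)
    ((cont.mono Set.Ioi_subset_Ici_self).locallyIntegrableOn measurableSet_Ioi) ?_ h1 ?_ h0
  · refine .of_bound 1 ?_
    filter_upwards [eventually_gt_atTop 0] with x hx
    rw [one_mul, Real.rpow_neg_one, Real.norm_of_nonneg (by positivity),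
      Real.norm_of_nonneg (by positivity)]
    gcongr
    linarith
  · refine .of_bound 1 ?_
    filter_upwards [self_mem_nhdsWithin] with x (hx : 0 < x)
    rw [neg_zero, Real.rpow_zero, norm_one, mul_one, Real.norm_of_nonneg (by positivity)]
    exact inv_le_one_of_one_le₀ (by linarith)

lemma continuousOn_log_one_add_div (hw : w ∈ slitPlane) :
    ContinuousOn (fun x : ℝ ↦ log (1 + w / x)) (Set.Ioi 0) := by
  refine ContinuousOn.clog ?_ fun x hx ↦ one_add_div_mem_slitPlane hx hw
  refine continuousOn_const.add (continuousOn_const.div (by fun_prop) fun x hx ↦ ?_)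
  exact ofReal_ne_zero.2 (ne_of_gt hx)

lemma log_one_add_div_isBigO_atTop (w : ℂ) :
    (fun x : ℝ ↦ log (1 + w / x)) =O[atTop] fun x : ℝ ↦ x ^ (-1 : ℝ) := by
  refine .of_bound (3 / 2 * ‖w‖) ?_
  filter_upwards [eventually_gt_atTop 0, eventually_ge_atTop (2 * ‖w‖)] with x hx hxw
  have norm_div_eq : ‖w / x‖ = ‖w‖ / x := by rw [norm_div, Complex.norm_of_nonneg hx.le]
  have small : ‖w / x‖ ≤ 1 / 2 := by
    rw [norm_div_eq, div_le_iff₀ hx]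
    linarith
  rw [Real.rpow_neg_one, Real.norm_of_nonneg (by positivity), mul_assoc, ← div_eq_mul_inv,
    ← norm_div_eq]
  exact norm_log_one_add_half_le_self small

lemma log_one_add_div_isBigO_nhdsGT_zero (hw : w ∈ slitPlane) {b : ℝ} (hb : 0 < b) :
    (fun x : ℝ ↦ log (1 + w / x)) =O[𝓝[>] 0] fun x : ℝ ↦ x ^ (-b) := by
  have log_eq : (fun x : ℝ ↦ log (x + w) - Real.log x) =ᶠ[𝓝[>] 0] fun x ↦ log (1 + w / x) := by
    filter_upwards [self_mem_nhdsWithin] with x (hx : 0 < x)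
    have factor : (x : ℂ) + w = x * (1 + w / x) := by
      have : (x : ℂ) ≠ 0 := Complex.ofReal_ne_zero.2 hx.ne'
      field_simp
    rw [factor, log_ofReal_mul hx (slitPlane_ne_zero (one_add_div_mem_slitPlane hx hw)),
      add_sub_cancel_left]
  have one_isBigO : (fun _ : ℝ ↦ (1 : ℝ)) =O[𝓝[>] 0] fun x : ℝ ↦ x ^ (-b) := by
    refine .of_bound 1 ?_
    filter_upwards [Ioc_mem_nhdsGT (zero_lt_one' ℝ)] with x hx
    rw [one_mul, norm_one]
    exact (Real.one_le_rpow_of_pos_of_le_one_of_nonpos hx.1 hx.2 (by linarith)).trans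
      (Real.le_norm_self _)
  have log_shift : (fun x : ℝ ↦ log (x + w)) =O[𝓝[>] 0] fun x : ℝ ↦ x ^ (-b) := by
    refine IsBigO.trans ?_ one_isBigO
    have : ContinuousAt (fun x : ℝ ↦ log (x + w)) 0 :=
      ContinuousAt.clog (by fun_prop) (by simpa only [ofReal_zero, zero_add] using hw)
    exact (this.tendsto.mono_left nhdsWithin_le_nhds).isBigO_one ℝ
  have log_real : (fun x : ℝ ↦ (Real.log x : ℂ)) =O[𝓝[>] 0] fun x : ℝ ↦ x ^ (-b) :=
    isBigO_ofReal_left.2 (isLittleO_log_rpow_nhdsGT_zero (by linarith)).isBigO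
  exact (log_shift.sub log_real).congr' log_eq EventuallyEq.rfl

lemma mellinConvergent_log_one_add_div (hs0 : 0 < s.re) (hs1 : s.re < 1) (hw : w ∈ slitPlane) :
    MellinConvergent (fun x : ℝ ↦ log (1 + w / x)) s :=
  mellinConvergent_of_isBigO_rpow
    ((continuousOn_log_one_add_div hw).locallyIntegrableOn measurableSet_Ioi)
    (log_one_add_div_isBigO_atTop w) hs1
    (log_one_add_div_isBigO_nhdsGT_zero hw (half_pos hs0)) (half_lt_self hs0)

lemma hasDerivAt_cpow_mul_log_one_add_div (hx : 0 < x) (s : ℂ) (hw : w ∈ slitPlane) :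
    HasDerivAt (fun z : ℂ ↦ (x : ℂ) ^ (s - 1) * log (1 + z / x))
      ((x : ℂ) ^ (s - 1) * (x + w)⁻¹) w := by
  have hx' : (x : ℂ) ≠ 0 := ofReal_ne_zero.2 hx.ne'
  have hxw := slitPlane_ne_zero (ofReal_add_mem_slitPlane hx.le hw)
  have := ((((hasDerivAt_id w).div_const (x : ℂ)).const_add 1).clog
    (one_add_div_mem_slitPlane hx hw)).const_mul ((x : ℂ) ^ (s - 1))
  convert! this using 2
  simp only [id]
  field_simp

lemma differentiableAt_mellin_log_one_add_div (hs0 : 0 < s.re) (hs1 : s.re < 1)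
    (hw : w ∈ slitPlane) :
    DifferentiableAt ℂ (fun z ↦ mellin (fun x : ℝ ↦ log (1 + z / x)) s) w := by
  obtain ⟨c, c_pos, near⟩ := exists_eventually_mul_one_add_le_norm hw
  set U : Set ℂ := slitPlane ∩ {z | ∀ x : ℝ, 0 ≤ x → c * (1 + x) ≤ ‖(x : ℂ) + z‖}
  have U_mem : U ∈ 𝓝 w := inter_mem (isOpen_slitPlane.mem_nhds hw) near
  have deriv_bound : ∀ x : ℝ, 0 < x → ∀ z ∈ U,
      ‖(x : ℂ) ^ (s - 1) * (x + z)⁻¹‖ ≤ c⁻¹ * (x ^ (s.re - 1) * (1 + x)⁻¹) := by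
    intro x hx z hz
    rw [norm_mul, norm_inv, norm_cpow_eq_rpow_re_of_pos hx, sub_re, one_re, mul_left_comm,
      ← mul_inv]
    gcongr
    exact hz.2 x hx.le
  have integrable (z : ℂ) (hz : z ∈ slitPlane) :=
    mellinConvergent_log_one_add_div hs0 hs1 hz
  exact (hasDerivAt_integral_of_dominated_loc_of_deriv_le U_mem
    (mem_of_superset U_mem fun z hz ↦ (integrable z hz.1).aestronglyMeasurable)
    (integrable w hw) (by fun_prop) (ae_restrict_of_forall_mem measurableSet_Ioi deriv_bound)
    ((integrableOn_rpow_mul_inv_one_add hs0 hs1).const_mul c⁻¹)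
    (ae_restrict_of_forall_mem measurableSet_Ioi fun x hx z hz ↦
      hasDerivAt_cpow_mul_log_one_add_div hx s hz.1)).2.differentiableAt

lemma mellin_log_one_add_ofReal_div {r : ℝ} (hr : 0 < r) (s : ℂ) :
    mellin (fun x : ℝ ↦ log (1 + r / x)) s =
      (r : ℂ) ^ s * mellin (fun x : ℝ ↦ log (1 + 1 / x)) s := by
  have rescale : (fun x : ℝ ↦ log (1 + r / x)) =
      fun x : ℝ ↦ log (1 + 1 / ((r⁻¹ * x : ℝ) : ℂ)) := by
    ext x
    rw [ofReal_mul, ofReal_inv, one_div, mul_inv, inv_inv, div_eq_mul_inv]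
  have arg_ne_pi : arg (r : ℂ) ≠ Real.pi := by
    rw [arg_ofReal_of_nonneg hr.le]
    exact Real.pi_pos.ne
  have := mellin_comp_mul_left (fun x : ℝ ↦ log (1 + 1 / (x : ℂ))) s (inv_pos.2 hr)
  rwa [← rescale, ofReal_inv, inv_cpow _ _ arg_ne_pi, cpow_neg, inv_inv] at this

lemma mellin_log_one_add_div (hs0 : 0 < s.re) (hs1 : s.re < 1) (hw : w ∈ slitPlane) :
    mellin (fun x : ℝ ↦ log (1 + w / x)) s = w ^ s * mellin (fun x : ℝ ↦ log (1 + 1 / x)) s := by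
  let M (z : ℂ) : ℂ := mellin (fun x : ℝ ↦ log (1 + z / x)) s
  have M_analytic : AnalyticOnNhd ℂ M slitPlane := DifferentiableOn.analyticOnNhd
    (fun z hz ↦ (differentiableAt_mellin_log_one_add_div hs0 hs1 hz).differentiableWithinAt)
    isOpen_slitPlane
  have pow_analytic : AnalyticOnNhd ℂ (fun z ↦ z ^ s * M 1) slitPlane :=
    DifferentiableOn.analyticOnNhd
      (fun z hz ↦ ((differentiableAt_id.cpow_const hz).mul_const _).differentiableWithinAt)
      isOpen_slitPlane
  have frequently_eq : ∃ᶠ z in 𝓝[≠] (1 : ℂ), M z = z ^ s * M 1 := by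
    have tendsto_ofReal : Tendsto ofReal (𝓝[>] (1 : ℝ)) (𝓝[≠] (1 : ℂ)) :=
      tendsto_nhdsWithin_iff.2 ⟨(continuous_ofReal.tendsto' 1 1 ofReal_one).mono_left
        nhdsWithin_le_nhds, by
          filter_upwards [self_mem_nhdsWithin] with r (hr : 1 < r)
          exact ofReal_ne_one.2 hr.ne'⟩
    refine tendsto_ofReal.frequently (Eventually.frequently ?_)
    filter_upwards [self_mem_nhdsWithin] with r (hr : 1 < r)
    exact mellin_log_one_add_ofReal_div (by linarith) s
  have preconnected : IsPreconnected slitPlane :=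
    (starConvex_one_slitPlane.isPathConnected one_mem_slitPlane).isConnected.isPreconnected
  exact M_analytic.eqOn_of_preconnected_of_frequently_eq pow_analytic preconnected
    one_mem_slitPlane frequently_eq hw

end LogMellin

section ThetaIntegral

open Complex

variable {θ σ x : ℝ}

lemma exp_ofReal_mul_I_mem_slitPlane (h0 : -Real.pi < θ) (hπ : θ < Real.pi) :
    exp (θ * I) ∈ slitPlane := by
  rw [mem_slitPlane_iff_arg, arg_exp_mul_I, (toIocMod_eq_self _).2 ⟨by linarith, by linarith⟩]
  exact ⟨hπ.ne, exp_ne_zero _⟩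

lemma Theta_one_eq_im_log (θ : ℝ) (hx : 0 < x) : Theta θ x 1 = (log (1 + exp (θ * I) / x)).im := by
  have factor : (x : ℂ) + exp (θ * I) = x * (1 + exp (θ * I) / x) := by
    have : (x : ℂ) ≠ 0 := ofReal_ne_zero.2 hx.ne'
    field_simp
  rw [Theta, ofReal_one, one_mul, log_im, factor, arg_real_mul _ hx]

lemma ofReal_cpow_sub_one (hx : 0 < x) (σ : ℝ) :
    (x : ℂ) ^ ((σ : ℂ) - 1) = ((x ^ (σ - 1) : ℝ) : ℂ) := by
  rw [ofReal_cpow hx.le, ofReal_sub, ofReal_one]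

lemma cpow_smul_log_im (hx : 0 < x) (σ θ : ℝ) :
    ((x : ℂ) ^ ((σ : ℂ) - 1) • log (1 + exp (θ * I) / x)).im = x ^ (σ - 1) * Theta θ x 1 := by
  rw [smul_eq_mul, ofReal_cpow_sub_one hx, im_ofReal_mul, Theta_one_eq_im_log θ hx]

lemma integrableOn_rpow_mul_Theta (hσ0 : 0 < σ) (hσ1 : σ < 1) (h0 : -Real.pi < θ)
    (hπ : θ < Real.pi) :
    IntegrableOn (fun x : ℝ ↦ x ^ (σ - 1) * Theta θ x 1) (Set.Ioi 0) :=
  IntegrableOn.congr_fun (mellinConvergent_log_one_add_div (s := σ) hσ0 hσ1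
      (exp_ofReal_mul_I_mem_slitPlane h0 hπ)).im
    (fun _ hx ↦ cpow_smul_log_im hx σ θ) measurableSet_Ioi

lemma integral_rpow_mul_Theta_eq_im_mellin (hσ0 : 0 < σ) (hσ1 : σ < 1) (h0 : -Real.pi < θ)
    (hπ : θ < Real.pi) :
    ∫ x in Set.Ioi 0, x ^ (σ - 1) * Theta θ x 1 =
      (mellin (fun x : ℝ ↦ log (1 + exp (θ * I) / x)) σ).im :=
  calc ∫ x in Set.Ioi 0, x ^ (σ - 1) * Theta θ x 1
      = ∫ x in Set.Ioi (0 : ℝ), ((x : ℂ) ^ ((σ : ℂ) - 1) • log (1 + exp (θ * I) / x)).im :=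
        setIntegral_congr_fun measurableSet_Ioi fun _ hx ↦ (cpow_smul_log_im hx σ θ).symm
    _ = _ := imCLM.integral_comp_comm (mellinConvergent_log_one_add_div (s := σ) hσ0 hσ1
        (exp_ofReal_mul_I_mem_slitPlane h0 hπ))

lemma integral_rpow_mul_Theta_eq_mul_sin (hσ0 : 0 < σ) (hσ1 : σ < 1) (h0 : -Real.pi < θ)
    (hπ : θ < Real.pi) :
    ∫ x in Set.Ioi 0, x ^ (σ - 1) * Theta θ x 1 =
      (mellin (fun x : ℝ ↦ log (1 + 1 / x)) σ).re * Real.sin (σ * θ) := by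
  have im_mellin_one : (mellin (fun x : ℝ ↦ log (1 + 1 / x)) σ).im = 0 := by
    have := integral_rpow_mul_Theta_eq_im_mellin hσ0 hσ1 (neg_neg_of_pos Real.pi_pos) Real.pi_pos
    simp only [ofReal_zero, zero_mul, exp_zero] at this
    rw [← this]
    refine setIntegral_eq_zero_of_forall_eq_zero fun x (hx : 0 < x) ↦ ?_
    have : Theta 0 x 1 = arg ((x + 1 : ℝ) : ℂ) := by simp [Theta]
    rw [this, arg_ofReal_of_nonneg (by positivity), mul_zero]
  have exp_cpow : exp (θ * I) ^ (σ : ℂ) = exp ((σ * θ : ℝ) * I) := by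
    rw [cpow_def_of_ne_zero (exp_ne_zero _), log_exp (by simpa) (by simpa using hπ.le)]
    push_cast
    ring_nf
  rw [integral_rpow_mul_Theta_eq_im_mellin hσ0 hσ1 h0 hπ,
    mellin_log_one_add_div hσ0 hσ1 (exp_ofReal_mul_I_mem_slitPlane h0 hπ), exp_cpow, mul_im,
    im_mellin_one, mul_zero, zero_add, exp_ofReal_mul_I_im, mul_comm]

lemma add_exp_pi_mul_I (x : ℝ) : (x : ℂ) + (1 : ℝ) * exp (Real.pi * I) = (x - 1 : ℝ) := by
  rw [exp_pi_mul_I]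
  push_cast
  ring

lemma tendsto_Theta_one_nhdsLT_pi_of_one_lt (hx : 1 < x) :
    Tendsto (fun θ ↦ Theta θ x 1) (𝓝[<] Real.pi) (𝓝 0) := by
  have arg_limit : arg ((x : ℂ) + (1 : ℝ) * exp (Real.pi * I)) = 0 := by
    rw [add_exp_pi_mul_I, arg_ofReal_of_nonneg (by linarith)]
  have : ContinuousAt (fun θ : ℝ ↦ Theta θ x 1) Real.pi :=
    (continuousAt_arg (by rw [add_exp_pi_mul_I, ofReal_mem_slitPlane]; linarith)).comp (by fun_prop)
  exact arg_limit ▸ this.tendsto.mono_left nhdsWithin_le_nhds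

lemma tendsto_Theta_one_nhdsLT_pi_of_lt_one (hx : x < 1) :
    Tendsto (fun θ ↦ Theta θ x 1) (𝓝[<] Real.pi) (𝓝 Real.pi) := by
  refine (tendsto_arg_nhdsWithin_im_nonneg_of_re_neg_of_im_zero
    (z := ((x - 1 : ℝ) : ℂ)) (by rw [ofReal_re]; linarith) (ofReal_im _)).comp
      (tendsto_nhdsWithin_iff.2 ⟨?_, ?_⟩)
  · have : Continuous fun θ : ℝ ↦ (x : ℂ) + (1 : ℝ) * exp (θ * I) := by fun_prop
    exact (this.tendsto' _ _ (add_exp_pi_mul_I x)).mono_left nhdsWithin_le_nhds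
  · filter_upwards [Ioo_mem_nhdsLT Real.pi_pos] with θ hθ
    rw [add_im, ofReal_im, zero_add, im_ofReal_mul_exp, one_mul]
    exact (Real.sin_pos_of_mem_Ioo hθ).le

lemma tendsto_integral_rpow_mul_Theta (hσ0 : 0 < σ) (hσ1 : σ < 1) :
    Tendsto (fun θ ↦ ∫ x in Set.Ioi 0, x ^ (σ - 1) * Theta θ x 1) (𝓝[<] Real.pi)
      (𝓝 (Real.pi / σ)) := by
  have integral_limit : ∫ x in Set.Ioi (0 : ℝ), (Set.Iio 1).indicator
      (fun x ↦ x ^ (σ - 1) * Real.pi) x = Real.pi / σ := by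
    rw [setIntegral_indicator measurableSet_Iio, Set.Ioi_inter_Iio, ← integral_Ioc_eq_integral_Ioo,
      ← intervalIntegral.integral_of_le zero_le_one, intervalIntegral.integral_mul_const,
      integral_rpow (Or.inl (by linarith)), sub_add_cancel, Real.one_rpow,
      Real.zero_rpow hσ0.ne', sub_zero, one_div_mul_eq_div]
  rw [← integral_limit]
  refine tendsto_integral_filter_of_dominated_convergence
    (fun x ↦ 4 * Real.pi * (x ^ (σ - 1) * (1 + x)⁻¹)) ?_ ?_
    ((integrableOn_rpow_mul_inv_one_add hσ0 hσ1).const_mul _) ?_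
  · filter_upwards [Ioo_mem_nhdsLT Real.pi_pos] with θ hθ
    exact (integrableOn_rpow_mul_Theta hσ0 hσ1 (by linarith [hθ.1, Real.pi_pos])
      hθ.2).aestronglyMeasurable
  · filter_upwards [Ioo_mem_nhdsLT Real.pi_pos] with θ hθ
    refine ae_restrict_of_forall_mem measurableSet_Ioi fun x (hx : 0 < x) ↦ ?_
    have := Theta_nonneg (x := x) hθ.1.le hθ.2.le zero_le_one
    rw [Real.norm_of_nonneg (by positivity), mul_left_comm]
    gcongr
    exact Theta_one_le θ hx
  · filter_upwards [Measure.ae_ne _ 1] with x hx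
    rcases hx.lt_or_gt with h | h
    · rw [Set.indicator_of_mem (Set.mem_Iio.2 h)]
      exact (tendsto_Theta_one_nhdsLT_pi_of_lt_one h).const_mul _
    · rw [Set.indicator_of_notMem (Set.notMem_Iio.2 h.le), ← mul_zero (x ^ (σ - 1))]
      exact (tendsto_Theta_one_nhdsLT_pi_of_one_lt h).const_mul _

lemma integral_rpow_mul_Theta (hσ0 : 0 < σ) (hσ1 : σ < 1) (h0 : -Real.pi < θ) (hπ : θ < Real.pi) :
    ∫ x in Set.Ioi 0, x ^ (σ - 1) * Theta θ x 1 =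
      Real.pi / σ * (Real.sin (σ * θ) / Real.sin (σ * Real.pi)) := by
  set A := (mellin (fun x : ℝ ↦ log (1 + 1 / x)) σ).re with hA
  have eq_mul_sin : (fun θ ↦ ∫ x in Set.Ioi 0, x ^ (σ - 1) * Theta θ x 1) =ᶠ[𝓝[<] Real.pi]
      fun θ ↦ A * Real.sin (σ * θ) := by
    filter_upwards [Ioo_mem_nhdsLT Real.pi_pos] with θ hθ
    exact integral_rpow_mul_Theta_eq_mul_sin hσ0 hσ1 (by linarith [hθ.1, Real.pi_pos]) hθ.2
  have limit_mul_sin : Tendsto (fun θ ↦ A * Real.sin (σ * θ)) (𝓝[<] Real.pi)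
      (𝓝 (A * Real.sin (σ * Real.pi))) :=
    (Continuous.tendsto (by fun_prop) _).mono_left nhdsWithin_le_nhds
  have A_mul_sin : A * Real.sin (σ * Real.pi) = Real.pi / σ := tendsto_nhds_unique limit_mul_sin
    ((tendsto_integral_rpow_mul_Theta hσ0 hσ1).congr' eq_mul_sin)
  have sin_pos : 0 < Real.sin (σ * Real.pi) := by
    apply Real.sin_pos_of_pos_of_lt_pi <;> nlinarith [Real.pi_pos]
  rw [integral_rpow_mul_Theta_eq_mul_sin hσ0 hσ1 h0 hπ, ← hA, ← A_mul_sin]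
  field_simp

end ThetaIntegral

section Drift

variable {θ α m : ℝ}

lemma rpow_mul_Theta_comp_rpow (hα : α ≠ 0) (θ : ℝ) {x : ℝ} (hx : 0 < x) :
    x ^ (1 / α - 1) * Theta θ ((x ^ (1 / α)) ^ α) 1 = x ^ (1 / α - 1) * Theta θ x 1 := by
  rw [one_div, Real.rpow_inv_rpow hx.le hα]

lemma integrableOn_Theta_rpow (hα : 1 < α) (h0 : -Real.pi < θ) (hπ : θ < Real.pi) :
    IntegrableOn (fun s : ℝ ↦ Theta θ (s ^ α) 1) (Set.Ioi 0) := by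
  have α_pos : 0 < α := by linarith
  refine (integrableOn_Ioi_comp_rpow_iff' _ (one_div_ne_zero α_pos.ne')).1 ?_
  exact (integrableOn_rpow_mul_Theta (by positivity) ((div_lt_one α_pos).2 hα) h0 hπ).congr_fun
    (fun x hx ↦ (rpow_mul_Theta_comp_rpow α_pos.ne' θ hx).symm) measurableSet_Ioi

lemma integral_Theta_rpow (θ α : ℝ) :
    ∫ s in Set.Ioi (0 : ℝ), Theta θ (s ^ α) 1 = Real.pi * Drift θ α := by
  rw [Drift, ← mul_assoc, mul_one_div_cancel Real.pi_ne_zero, one_mul]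

lemma Drift_eq (hα : 1 < α) (h0 : -Real.pi < θ) (hπ : θ < Real.pi) :
    Drift θ α = Real.sin (θ / α) / Real.sin (Real.pi / α) := by
  have α_pos : 0 < α := by linarith
  have substitution : ∫ s in Set.Ioi (0 : ℝ), Theta θ (s ^ α) 1 =
      1 / α * ∫ x in Set.Ioi (0 : ℝ), x ^ (1 / α - 1) * Theta θ x 1 := by
    rw [← integral_comp_rpow_Ioi_of_pos (one_div_pos.2 α_pos), ← integral_const_mul]
    refine setIntegral_congr_fun measurableSet_Ioi fun x hx ↦ ?_
    simp only [smul_eq_mul, mul_assoc, rpow_mul_Theta_comp_rpow α_pos.ne' θ hx]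
  rw [Drift, substitution,
    integral_rpow_mul_Theta (by positivity) ((div_lt_one α_pos).2 hα) h0 hπ,
    one_div_mul_eq_div α θ, one_div_mul_eq_div α Real.pi]
  have := Real.pi_ne_zero
  field_simp

lemma Drift_one_add_div_pi (h0 : 0 < θ) (hπ : θ < Real.pi) : Drift θ (1 + θ / Real.pi) = 1 := by
  have pi_pos := Real.pi_pos
  set α := 1 + θ / Real.pi with hα
  have one_lt : 1 < α := lt_add_of_pos_right 1 (by positivity)
  have supplementary : θ / α = Real.pi - Real.pi / α := by
    rw [eq_sub_iff_add_eq, ← add_div, div_eq_iff (by linarith), hα]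
    field_simp
    ring
  have sin_pos : 0 < Real.sin (Real.pi / α) :=
    Real.sin_pos_of_pos_of_lt_pi (by positivity) (div_lt_self pi_pos one_lt)
  rw [Drift_eq one_lt (by linarith) hπ, supplementary, Real.sin_pi_sub, div_self sin_pos.ne']

lemma Theta_rpow_rpow (hm : 0 < m) (θ α : ℝ) {s : ℝ} (hs : 0 < s) :
    Theta θ ((m⁻¹ * s) ^ α) 1 = Theta θ (s ^ α) (m ^ α) := by
  rw [← Theta_mul (Real.rpow_pos_of_pos hm α), ← Real.mul_rpow hm.le (by positivity),
    mul_inv_cancel_left₀ hm.ne', mul_one]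

lemma integrableOn_Theta_rpow_rpow (hα : 1 < α) (h0 : -Real.pi < θ) (hπ : θ < Real.pi)
    (hm : 0 < m) : IntegrableOn (fun s : ℝ ↦ Theta θ (s ^ α) (m ^ α)) (Set.Ioi 0) := by
  refine IntegrableOn.congr_fun ?_ (fun s hs ↦ Theta_rpow_rpow hm θ α hs) measurableSet_Ioi
  rw [integrableOn_Ioi_comp_mul_left_iff (fun s ↦ Theta θ (s ^ α) 1) 0 (inv_pos.2 hm), mul_zero]
  exact integrableOn_Theta_rpow hα h0 hπ

lemma integral_Theta_rpow_rpow (hm : 0 < m) (θ α : ℝ) :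
    ∫ s in Set.Ioi (0 : ℝ), Theta θ (s ^ α) (m ^ α) = m * (Real.pi * Drift θ α) := by
  rw [← integral_Theta_rpow, ← setIntegral_congr_fun measurableSet_Ioi
      fun s hs ↦ Theta_rpow_rpow hm θ α hs,
    integral_comp_mul_left_Ioi (fun s ↦ Theta θ (s ^ α) 1) 0 (inv_pos.2 hm), mul_zero, inv_inv,
    smul_eq_mul]

lemma tsum_Theta_rpow_le (h0 : 0 < θ) (hπ : θ < Real.pi) (hα : 1 < α) (hm : 0 < m) :
    ∑' i : ℕ, ENNReal.ofReal (Theta θ (((i + 1 : ℕ) : ℝ) ^ α) (m ^ α)) ≤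
      ENNReal.ofReal (m * (Real.pi * Drift θ α)) := by
  let f (s : ℝ) : ℝ := Theta θ (s ^ α) (m ^ α)
  have mα_pos : 0 < m ^ α := Real.rpow_pos_of_pos hm α
  have f_nonneg (s : ℝ) : 0 ≤ f s := Theta_nonneg h0.le hπ.le mα_pos.le
  have f_anti : AntitoneOn f (Set.Ici 0) := (antitone_Theta h0 hπ mα_pos).comp_monotoneOn
    (Real.monotoneOn_rpow_Ici_of_exponent_nonneg (by linarith))
  have f_integrable : IntegrableOn f (Set.Ioi 0) :=
    integrableOn_Theta_rpow_rpow hα (by linarith) hπ hm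
  have f_summable : Summable fun i : ℕ ↦ f (i + 1 : ℕ) :=
    (summable_nat_add_iff (f := fun n : ℕ ↦ f n) 1).2
      (f_anti.summable_of_integrableOn_Ioi_zero f_integrable fun s _ ↦ f_nonneg s)
  rw [← integral_Theta_rpow_rpow hm]
  calc ∑' i : ℕ, ENNReal.ofReal (f (i + 1 : ℕ))
      = ENNReal.ofReal (∑' i : ℕ, f (i + 1 : ℕ)) :=
        (ENNReal.ofReal_tsum_of_nonneg (fun _ ↦ f_nonneg _) f_summable).symm
    _ ≤ ENNReal.ofReal (∫ s in Set.Ioi 0, f s) := ENNReal.ofReal_le_ofReal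
        (f_anti.tsum_add_one_le_integral f_integrable fun s _ ↦ f_nonneg s)

end Drift

section Phi

variable {θ α m T c : ℝ} {X Y : ℕ → ℝ} {n j : ℕ}

lemma phi_le_of_tsum_tail_le (h0 : 0 < θ) (hπ : θ < Real.pi) (hX : ∀ k, 0 ≤ X (k + 1))
    (hY : 0 < Y j) (hT : 0 ≤ T)
    (h : ∑' i, ENNReal.ofReal (Theta θ (X (i + n + 1)) (Y j)) ≤ ENNReal.ofReal T) :
    phi θ X Y j ≤ ENNReal.ofReal ((n * θ + T) / Real.pi) := by
  have head : ∑ k ∈ Finset.range n, ENNReal.ofReal (Theta θ (X (k + 1)) (Y j)) ≤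
      ENNReal.ofReal (n * θ) := by
    rw [← ENNReal.ofReal_sum_of_nonneg fun k _ ↦ Theta_nonneg h0.le hπ.le hY.le]
    refine ENNReal.ofReal_le_ofReal ((Finset.sum_le_card_nsmul _ _ θ fun k _ ↦
      Theta_le h0 hπ (hX k) hY).trans_eq ?_)
    rw [Finset.card_range, nsmul_eq_mul]
  rw [phi, ← ENNReal.summable.sum_add_tsum_nat_add' (k := n), ← one_div_mul_eq_div _ (n * θ + T),
    ENNReal.ofReal_mul (by positivity), ENNReal.ofReal_add (by positivity) hT]
  gcongr

lemma phi_self_le_of_rpow_growth (h0 : 0 < θ) (hπ : θ < Real.pi) (hX : ∀ k, 0 < X (k + 1))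
    (hα : 1 < α) (hc : 0 < c)
    (growth : ∀ i : ℕ, c * ((i : ℝ) + 1) ^ α * X (n + 1) ≤ X (i + 1 + n + 1)) :
    phi θ X X (n + 1) ≤
      ENNReal.ofReal ((n + 1 / 2) * θ / Real.pi + 2 / c * ∑' i : ℕ, (((i : ℝ) + 1) ^ α)⁻¹) := by
  have summable : Summable fun i : ℕ ↦ (((i : ℝ) + 1) ^ α)⁻¹ := by
    simpa only [Nat.cast_add_one] using (summable_nat_add_iff 1).2 (Real.summable_nat_rpow_inv.2 hα)
  have term_le (i : ℕ) : Theta θ (X (i + 1 + n + 1)) (X (n + 1)) ≤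
      2 * Real.pi / c * (((i : ℝ) + 1) ^ α)⁻¹ := by
    have ratio_le : X (n + 1) / X (i + 1 + n + 1) ≤ c⁻¹ * (((i : ℝ) + 1) ^ α)⁻¹ := by
      rw [div_le_iff₀ (hX _), ← mul_inv, inv_mul_eq_div, le_div_iff₀ (by positivity), mul_comm]
      exact growth i
    calc _ ≤ 2 * Real.pi * (X (n + 1) / X (i + 1 + n + 1)) := Theta_le_div θ (hX _) (hX n).le
      _ ≤ 2 * Real.pi * (c⁻¹ * (((i : ℝ) + 1) ^ α)⁻¹) := by gcongr
      _ = _ := by rw [← mul_assoc, div_eq_mul_inv]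
  have tail_le : ∑' i, ENNReal.ofReal (Theta θ (X (i + n + 1)) (X (n + 1))) ≤
      ENNReal.ofReal (θ / 2 + 2 * Real.pi / c * ∑' i : ℕ, (((i : ℝ) + 1) ^ α)⁻¹) := by
    rw [tsum_eq_zero_add' ENNReal.summable, zero_add, Theta_self h0.le hπ (hX n),
      ENNReal.ofReal_add (by positivity) (by positivity), ← tsum_mul_left,
      ENNReal.ofReal_tsum_of_nonneg (fun _ ↦ by positivity) (summable.mul_left _)]
    gcongr with i
    exact term_le i
  refine (phi_le_of_tsum_tail_le h0 hπ (fun k ↦ (hX k).le) (hX n) (by positivity)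
    tail_le).trans_eq ?_
  congr 1
  have := Real.pi_ne_zero
  field_simp
  ring

lemma phi_le_of_rpow_le (h0 : 0 < θ) (hπ : θ < Real.pi) (hX : ∀ k, 0 ≤ X (k + 1)) (hα : 1 < α)
    (hm : 0 < m) (hXα : ∀ i : ℕ, ((i + 1 : ℕ) : ℝ) ^ α ≤ X (i + n + 1)) (hY : Y j = m ^ α) :
    phi θ X Y j ≤ ENNReal.ofReal (n * θ / Real.pi + m * Drift θ α) := by
  have Y_pos : 0 < Y j := hY ▸ Real.rpow_pos_of_pos hm α
  have Drift_nonneg : 0 ≤ Real.pi * Drift θ α := by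
    rw [← integral_Theta_rpow]
    exact integral_nonneg fun s ↦ Theta_nonneg h0.le hπ.le zero_le_one
  have tail_le : ∑' i, ENNReal.ofReal (Theta θ (X (i + n + 1)) (Y j)) ≤
      ENNReal.ofReal (m * (Real.pi * Drift θ α)) := by
    refine le_trans ?_ (tsum_Theta_rpow_le h0 hπ hα hm)
    rw [← hY]
    gcongr with i
    exact antitone_Theta h0 hπ Y_pos (hXα i)
  refine (phi_le_of_tsum_tail_le h0 hπ hX Y_pos (by positivity) tail_le).trans_eq ?_
  congr 1
  have := Real.pi_ne_zero
  field_simp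

end Phi

section LowerSeq

variable {θ α c K : ℝ} {N j : ℕ}

lemma one_lt_one_add_div_pi (h0 : 0 < θ) : 1 < 1 + θ / Real.pi :=
  lt_add_of_pos_right 1 (div_pos h0 Real.pi_pos)

lemma one_add_div_pi_le_two (hπ : θ ≤ Real.pi) : 1 + θ / Real.pi ≤ 2 := by
  linarith [(div_le_one Real.pi_pos).2 hπ]

lemma add_one_rpow_le_pow {b : ℝ} (hα : α ≤ 2) (hb : 4 ≤ b) (i : ℕ) :
    ((i : ℝ) + 1) ^ α ≤ b ^ i := by
  have le_two_pow : (i : ℝ) + 1 ≤ 2 ^ i := by exact_mod_cast i.lt_two_pow_self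
  calc ((i : ℝ) + 1) ^ α ≤ ((i : ℝ) + 1) ^ (2 : ℝ) :=
        Real.rpow_le_rpow_of_exponent_le (by linarith [i.cast_nonneg (α := ℝ)]) hα
    _ ≤ (2 ^ i) ^ 2 := by rw [Real.rpow_two]; gcongr
    _ = 4 ^ i := by rw [pow_right_comm]; norm_num
    _ ≤ b ^ i := by gcongr

lemma lowerSeq_of_lt (θ : ℝ) (hj : j < N ^ 2) :
    lowerSeq θ N j = (N : ℝ) ^ ((j : ℤ) - (N : ℤ) ^ 2) := if_pos hj

lemma lowerSeq_of_le (θ : ℝ) (hj : N ^ 2 ≤ j) :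
    lowerSeq θ N j = ((j : ℝ) - (N : ℝ) ^ 2 + N) ^ (1 + θ / Real.pi) := if_neg hj.not_gt

lemma lowerSeq_sq_add (θ : ℝ) (N i : ℕ) :
    lowerSeq θ N (N ^ 2 + i) = ((i : ℝ) + N) ^ (1 + θ / Real.pi) := by
  rw [lowerSeq_of_le θ (Nat.le_add_right _ _), Nat.cast_add, Nat.cast_pow, add_sub_cancel_left]

lemma lowerSeq_pos (θ : ℝ) (hN : 0 < N) (j : ℕ) : 0 < lowerSeq θ N j := by
  have : (0 : ℝ) < N := Nat.cast_pos.2 hN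
  rcases lt_or_ge j (N ^ 2) with hj | hj
  · rw [lowerSeq_of_lt θ hj]
    positivity
  · obtain ⟨i, rfl⟩ := Nat.exists_eq_add_of_le hj
    rw [lowerSeq_sq_add]
    positivity

lemma lowerSeq_rpow_growth_of_lt (hπ : θ < Real.pi) (hN : 4 ≤ N) {i : ℕ}
    (hji : j + (i + 1) < N ^ 2) :
    N * ((i : ℝ) + 1) ^ (1 + θ / Real.pi) * lowerSeq θ N j ≤ lowerSeq θ N (j + (i + 1)) := by
  have N_pos : (0 : ℝ) < N := by positivity
  have lowerSeq_eq : lowerSeq θ N (j + (i + 1)) = N * N ^ i * lowerSeq θ N j := by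
    rw [lowerSeq_of_lt θ hji, lowerSeq_of_lt θ (by omega), ← pow_succ', ← zpow_natCast,
      ← zpow_add₀ N_pos.ne']
    congr 1
    push_cast
    ring
  have := lowerSeq_pos θ (by omega : 0 < N) j
  rw [lowerSeq_eq]
  gcongr
  exact add_one_rpow_le_pow (one_add_div_pi_le_two hπ.le) (Nat.ofNat_le_cast.2 hN) i

lemma lowerSeq_rpow_growth_of_le (h0 : 0 < θ) (hπ : θ < Real.pi) (hN : 4 ≤ N) (hj : j < N ^ 2)
    {i : ℕ} (hji : N ^ 2 ≤ j + (i + 1)) :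
    N * ((i : ℝ) + 1) ^ (1 + θ / Real.pi) * lowerSeq θ N j ≤ lowerSeq θ N (j + (i + 1)) := by
  have N_ge : (4 : ℝ) ≤ N := Nat.ofNat_le_cast.2 hN
  have α_pos := zero_lt_one.trans (one_lt_one_add_div_pi h0)
  set α := 1 + θ / Real.pi
  obtain ⟨r, hr⟩ : ∃ r, j + (r + 1) = N ^ 2 := ⟨N ^ 2 - j - 1, by omega⟩
  obtain ⟨t, rfl⟩ : ∃ t, i = r + t := ⟨i - r, by omega⟩
  have lowerSeq_j : lowerSeq θ N j = ((N : ℝ) * N ^ r)⁻¹ := by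
    rw [lowerSeq_of_lt θ hj, ← pow_succ', ← zpow_natCast, ← zpow_neg, ← Nat.cast_pow, ← hr]
    congr 1
    push_cast
    ring
  have lowerSeq_k : lowerSeq θ N (j + (r + t + 1)) = ((t : ℝ) + N) ^ α := by
    rw [← lowerSeq_sq_add, ← hr]
    congr 1
    ring
  rw [lowerSeq_j, lowerSeq_k, ← div_eq_mul_inv, mul_div_mul_left _ _ (by positivity),
    div_le_iff₀ (by positivity)]
  calc (((r + t : ℕ) : ℝ) + 1) ^ α ≤ (((t : ℝ) + N) * (r + 1)) ^ α := by
        gcongr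
        push_cast
        nlinarith [mul_nonneg r.cast_nonneg (t.cast_nonneg (α := ℝ)), r.cast_nonneg (α := ℝ)]
    _ = ((t : ℝ) + N) ^ α * ((r : ℝ) + 1) ^ α := Real.mul_rpow (by positivity) (by positivity)
    _ ≤ ((t : ℝ) + N) ^ α * (N : ℝ) ^ r := by
        gcongr
        exact add_one_rpow_le_pow (one_add_div_pi_le_two hπ.le) N_ge r

lemma lowerSeq_rpow_growth (h0 : 0 < θ) (hπ : θ < Real.pi) (hN : 4 ≤ N) (hj : j < N ^ 2) (i : ℕ) :
    N * ((i : ℝ) + 1) ^ (1 + θ / Real.pi) * lowerSeq θ N j ≤ lowerSeq θ N (j + (i + 1)) :=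
  (lt_or_ge (j + (i + 1)) (N ^ 2)).elim (lowerSeq_rpow_growth_of_lt hπ hN)
    (lowerSeq_rpow_growth_of_le h0 hπ hN hj)

lemma phi_lowerSeq_le_of_lt (h0 : 0 < θ) (hπ : θ < Real.pi) (hN : 4 ≤ N) (hj : 1 ≤ j)
    (hjN : j < N ^ 2) :
    phi θ (lowerSeq θ N) (lowerSeq θ N) j ≤ ENNReal.ofReal (((j : ℝ) - 1 / 2) * θ / Real.pi +
      2 / N * ∑' i : ℕ, (((i : ℝ) + 1) ^ (1 + θ / Real.pi))⁻¹) := by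
  obtain ⟨n, rfl⟩ := Nat.exists_eq_add_of_le' hj
  have growth (i : ℕ) : N * ((i : ℝ) + 1) ^ (1 + θ / Real.pi) * lowerSeq θ N (n + 1) ≤
      lowerSeq θ N (i + 1 + n + 1) :=
    (lowerSeq_rpow_growth h0 hπ hN hjN i).trans_eq (congrArg _ (by ring))
  convert phi_self_le_of_rpow_growth h0 hπ (fun k ↦ lowerSeq_pos θ (by omega) _)
    (one_lt_one_add_div_pi h0) (Nat.cast_pos.2 (by omega)) growth using 4
  push_cast
  ring

lemma phi_lowerSeq_le_of_le (h0 : 0 < θ) (hπ : θ < Real.pi) (hN : 0 < N) (hj : N ^ 2 ≤ j) :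
    phi θ (lowerSeq θ N) (lowerSeq θ N) j ≤
      ENNReal.ofReal (((N : ℝ) ^ 2 - 1) * θ / Real.pi + ((j : ℝ) - N ^ 2 + N)) := by
  have N_ge_one : (1 : ℝ) ≤ N := Nat.one_le_cast.2 hN
  have j_ge : (N : ℝ) ^ 2 ≤ j := by exact_mod_cast hj
  obtain ⟨n, hn⟩ : ∃ n, n + 1 = N ^ 2 := ⟨N ^ 2 - 1, Nat.sub_add_cancel (Nat.pow_pos hN)⟩
  have tail_ge (i : ℕ) : ((i + 1 : ℕ) : ℝ) ^ (1 + θ / Real.pi) ≤ lowerSeq θ N (i + n + 1) := by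
    rw [add_assoc, hn, add_comm i (N ^ 2), lowerSeq_sq_add, Nat.cast_add_one]
    gcongr
  have n_eq : (n : ℝ) = (N : ℝ) ^ 2 - 1 := eq_sub_of_add_eq (by exact_mod_cast hn)
  have bound := phi_le_of_rpow_le h0 hπ (fun k ↦ (lowerSeq_pos θ hN _).le)
    (one_lt_one_add_div_pi h0) (by linarith) tail_ge (lowerSeq_of_le θ hj)
  rwa [Drift_one_add_div_pi h0 hπ, mul_one, n_eq] at bound

lemma sq_sub_one_mul_add_le_sub (c0 : 0 ≤ c) (hK : 0 ≤ K) {x : ℝ} (hx : 1 ≤ x)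
    (hxc : 1 + K ≤ x * (1 - c)) (y : ℝ) : (x ^ 2 - 1) * c + (y - x ^ 2 + x) ≤ y - K := by
  nlinarith [mul_le_mul_of_nonneg_left hxc (zero_le_one.trans hx), mul_nonneg (sub_nonneg.2 hx) hK]

lemma exists_pos_forall_linear_add_le {Q : ℕ → ℝ} (hc : c < 1)
    (hQK : ∀ j : ℕ, 1 ≤ j → (j : ℝ) - K ≤ Q j)
    (hQ : ∀ j : ℕ, 1 ≤ j → ((j : ℝ) - 1 / 2) * c < Q j) :
    ∃ δ > 0, ∀ j : ℕ, 1 ≤ j → ((j : ℝ) - 1 / 2) * c + δ ≤ Q j := by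
  have gap_tendsto : Tendsto (fun j : ℕ ↦ Q j - ((j : ℝ) - 1 / 2) * c) atTop atTop := by
    have linear_tendsto : Tendsto (fun j : ℕ ↦ (j : ℝ) * (1 - c) + (c / 2 - K)) atTop atTop :=
      tendsto_atTop_add_const_right _ _
        (tendsto_natCast_atTop_atTop.atTop_mul_const (sub_pos.2 hc))
    refine tendsto_atTop_mono' _ ?_ linear_tendsto
    filter_upwards [eventually_ge_atTop 1] with j hj
    linarith [hQK j hj]
  obtain ⟨j₀, hj₀, hmin⟩ := (Nat.cofinite_eq_atTop ▸ gap_tendsto).exists_within_forall_le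
    (s := Set.Ici 1) ⟨1, le_rfl⟩
  exact ⟨_, sub_pos.2 (hQ j₀ hj₀), fun j hj ↦ by linarith [hmin j hj]⟩

end LowerSeq

theorem stmt_14 (θ : ℝ) (hθ : 0 < θ) (hθπ : θ < Real.pi)
    (Q : ℕ → ℝ) (hQpos : ∀ k, 1 ≤ k → 0 < Q k)
    (K : ℝ) (hK : 0 < K) (hQK : ∀ j : ℕ, 1 ≤ j → (j : ℝ) - K ≤ Q j)
    (hQ' : ∀ j : ℕ, 1 ≤ j → ((j : ℝ) - 1 / 2) * θ / Real.pi < Q j) :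
    ∃ N₀ : ℕ, ∀ N : ℕ, N₀ ≤ N → ∀ j : ℕ, 1 ≤ j →
      phi θ (lowerSeq θ N) (lowerSeq θ N) j ≤ ENNReal.ofReal (Q j) := by
  have pi_pos := Real.pi_pos
  have one_sub_pos : 0 < 1 - θ / Real.pi := sub_pos.2 ((div_lt_one pi_pos).2 hθπ)
  obtain ⟨δ, δ_pos, gap⟩ := exists_pos_forall_linear_add_le (sub_pos.1 one_sub_pos) hQK
    (by simpa only [mul_div_assoc] using hQ')
  set S := ∑' i : ℕ, (((i : ℝ) + 1) ^ (1 + θ / Real.pi))⁻¹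
  have error_small : ∀ᶠ N : ℕ in atTop, 2 / (N : ℝ) * S < δ := by
    have : Tendsto (fun N : ℕ ↦ 2 / (N : ℝ) * S) atTop (𝓝 (0 * S)) :=
      (tendsto_const_div_atTop_nhds_zero_nat 2).mul_const S
    exact this.eventually_lt_const (by rwa [zero_mul])
  have N_large : ∀ᶠ N : ℕ in atTop, 1 + K ≤ N * (1 - θ / Real.pi) :=
    (tendsto_natCast_atTop_atTop.atTop_mul_const one_sub_pos).eventually_ge_atTop _
  obtain ⟨N₀, hN₀⟩ := eventually_atTop.1
    ((eventually_ge_atTop 4).and (error_small.and N_large))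
  refine ⟨N₀, fun N hN j hj ↦ ?_⟩
  obtain ⟨four_le, error_lt, K_le⟩ := hN₀ N hN
  rcases lt_or_ge j (N ^ 2) with hjN | hjN
  · refine (phi_lowerSeq_le_of_lt hθ hθπ four_le hj hjN).trans (ENNReal.ofReal_le_ofReal ?_)
    rw [mul_div_assoc]
    linarith [gap j hj]
  · refine (phi_lowerSeq_le_of_le hθ hθπ (by omega) hjN).trans (ENNReal.ofReal_le_ofReal ?_)
    rw [mul_div_assoc]
    exact (sq_sub_one_mul_add_le_sub (by positivity) hK.le
      (Nat.one_le_cast.2 (by omega)) K_le j).trans (hQK j hj)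
end

section
/- Assume Q_k = k + O(1) and Q_k > (k − 1/2)·θ/π for all k. Let Z̲ ≤ Z̄ be sequences of positive reals with ln Z̲_k = α_θ·ln k + o(1) and ln Z̄_k = α_θ·ln k + o(1). Then there exist sequences Z̲' ≤ Z̄' of positive reals with ln Z̲'_k = α_θ·ln k + o(1) and ln Z̄'_k = α_θ·ln k + o(1) such that: for every sequence of sequences (X^{(n)})_{n≥0} of positive reals with Z̲_k ≤ X^{(0)}_k ≤ Z̄_k for all k and φ_j(X^{(n)}, X^{(n+1)}) = Q_j for all j ≥ 1 and n ≥ 0, one has Z̲'_k ≤ X^{(n)}_k ≤ Z̄'_k for all k ≥ 1 and n ≥ 0. -/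
open Filter Asymptotics MeasureTheory
open scoped ENNReal Topology

/-! The map `X ↦ Y` defined by `φ_j(X, Y) = Q_j` obeys a comparison principle, since `φ_j(X, Y)` is
decreasing in `X` and strictly increasing in `Y_j`: if `φ_j(Z, Z) ≥ Q_j` for all `j`, an orbit that
starts below `Z` stays below `Z`, and if `φ_j(Z, Z) ≤ Q_j` for all `j`, an orbit that starts above
`Z` stays above `Z`. So the infimum of all such supersolutions above `Z̄` and the supremum of all
such subsolutions below `Z̲` confine every orbit, and it remains to find barriers of the right
growth up to factors `e^{±η}`, which are harmless because `φ` is scale invariant.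

Comparing sums with integrals gives `φ_j(Z, Z) = j·D_α + O(1)` for `Z_k = k^α`, where `D_α` is the
drift, and `D_α = 1` at `α = α_θ`. Passing to `(k + L)^α` raises `j·D_α` by `L` and removes `L`
terms from `φ_j`, each at most `θ/π < 1`, so that for large `L` the bounded error is absorbed and
`(k + L)^α` is a supersolution. Likewise `(k - L)^α` becomes a subsolution for `k > L`, whatever the
`L` initial terms are. If these are widely separated, then for `j ≤ L` the terms of `π·φ_j` are
close to `θ`, `θ/2`, `0` below, at and above the diagonal, so that `φ_j` is close to
`(j - 1/2)·θ/π < Q_j`.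

The drift is the imaginary part at `z = e^{iθ}` of `π⁻¹ ∫_0^∞ (log (s^α + z) - log s^α) ds`, which
is analytic on the slit plane and homogeneous of degree `1/α` in `z`, hence a multiple of `z^{1/α}`;
the constant follows from `θ → π`, where `Θ(s^α, 1)` becomes `π` for `s < 1` and `0` for `s > 1`.
-/

section Argument

open Complex

lemma arg_lt_arg_of_im_mul_re_lt {z w : ℂ} (hw : 0 ≤ w.im) (h : z.im * w.re < z.re * w.im) :
    arg z < arg w := by
  by_contra! hle
  have hsin : 0 ≤ Real.sin (arg z - arg w) :=
    Real.sin_nonneg_of_nonneg_of_le_pi (sub_nonneg.2 hle)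
      (by linarith [arg_le_pi z, arg_nonneg_iff.2 hw])
  have hcross : z.im * w.re - z.re * w.im = ‖z‖ * ‖w‖ * Real.sin (arg z - arg w) := by
    rw [Real.sin_sub, ← norm_mul_cos_arg z, ← norm_mul_sin_arg z, ← norm_mul_cos_arg w,
      ← norm_mul_sin_arg w]
    ring
  have : 0 ≤ ‖z‖ * ‖w‖ * Real.sin (arg z - arg w) := by positivity
  linarith

lemma add_mem_slitPlane {z : ℂ} (hz : z ∈ slitPlane) {x : ℝ} (hx : 0 ≤ x) :
    (x : ℂ) + z ∈ slitPlane := by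
  rw [mem_slitPlane_iff] at hz ⊢
  simp only [add_re, ofReal_re, add_im, ofReal_im, zero_add]
  exact hz.imp (fun h => by linarith) id

lemma exp_mul_I_mem_slitPlane {t : ℝ} (ht : 0 ≤ t) (htπ : t < Real.pi) :
    exp (t * I) ∈ slitPlane := by
  rw [mem_slitPlane_iff, exp_ofReal_mul_I_re, exp_ofReal_mul_I_im]
  rcases ht.eq_or_lt with rfl | ht
  · exact .inl (by simp)
  · exact .inr (Real.sin_pos_of_pos_of_lt_pi ht htπ).ne'

lemma log_ofReal_add_sub_log {x : ℝ} (hx : 0 < x) {z : ℂ} (hz : (x : ℂ) + z ≠ 0) :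
    log (x + z) - Real.log x = log (1 + z / x) := by
  have hx' : (x : ℂ) ≠ 0 := mod_cast hx.ne'
  have hmul : (x : ℂ) + z = x * (1 + z / x) := by field_simp
  rw [hmul, log_ofReal_mul hx (right_ne_zero_of_mul (hmul ▸ hz)), add_sub_cancel_left]

lemma norm_log_ofReal_add_sub_log_le {x : ℝ} (hx : 0 < x) {z : ℂ} (hz : 2 * ‖z‖ ≤ x) :
    ‖log (x + z) - Real.log x‖ ≤ 3 / 2 * (‖z‖ / x) := by
  have hdiv : ‖z / x‖ = ‖z‖ / x := by rw [norm_div, norm_real, Real.norm_of_nonneg hx.le]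
  have hne : (x : ℂ) + z ≠ 0 := fun h => by
    have : ‖z‖ = x := by
      rw [← norm_neg, ← eq_neg_of_add_eq_zero_left h, norm_real, Real.norm_of_nonneg hx.le]
    linarith
  rw [log_ofReal_add_sub_log hx hne, ← hdiv]
  exact norm_log_one_add_half_le_self (by rw [hdiv, div_le_iff₀ hx]; linarith)

lemma abs_arg_ofReal_add_le {x : ℝ} (hx : 0 < x) (z : ℂ) :
    |arg (x + z)| ≤ 2 * Real.pi * (‖z‖ / x) := by
  have hπ := Real.pi_gt_three
  rcases le_or_gt (2 * ‖z‖) x with hz | hz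
  · have him : (log (x + z) - Real.log x).im = arg (x + z) := by
      rw [sub_im, log_im, ofReal_im, sub_zero]
    rw [← him]
    refine (abs_im_le_norm _).trans ((norm_log_ofReal_add_sub_log_le hx hz).trans ?_)
    gcongr
    linarith
  · have : 1 / 2 < ‖z‖ / x := by rw [lt_div_iff₀ hx]; linarith
    nlinarith [abs_arg_le_pi (x + z)]

end Argument

section Theta

variable {θ : ℝ}

lemma re_ofReal_add_mul_exp (θ a b : ℝ) :
    ((a : ℂ) + b * Complex.exp (θ * Complex.I)).re = a + b * Real.cos θ := by
  rw [Complex.add_re, Complex.re_ofReal_mul, Complex.exp_ofReal_mul_I_re, Complex.ofReal_re]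

lemma im_ofReal_add_mul_exp (θ a b : ℝ) :
    ((a : ℂ) + b * Complex.exp (θ * Complex.I)).im = b * Real.sin θ := by
  rw [Complex.add_im, Complex.im_ofReal_mul, Complex.exp_ofReal_mul_I_im, Complex.ofReal_im,
    zero_add]

lemma strictMonoOn_theta_right (hθ : 0 < θ) (hθπ : θ < Real.pi) {a : ℝ} (ha : 0 < a) :
    StrictMonoOn (Theta θ a) (Set.Ici 0) := by
  intro b _ c hc hbc
  have hsin := Real.sin_pos_of_pos_of_lt_pi hθ hθπ
  apply arg_lt_arg_of_im_mul_re_lt <;> simp only [re_ofReal_add_mul_exp, im_ofReal_add_mul_exp]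
  · exact mul_nonneg hc hsin.le
  · have := mul_pos (mul_pos ha (sub_pos.2 hbc)) hsin
    linarith

lemma strictAnti_theta_left (hθ : 0 < θ) (hθπ : θ < Real.pi) {b : ℝ} (hb : 0 < b) :
    StrictAnti (Theta θ · b) := by
  intro a c hac
  have hsin := Real.sin_pos_of_pos_of_lt_pi hθ hθπ
  apply arg_lt_arg_of_im_mul_re_lt <;> simp only [re_ofReal_add_mul_exp, im_ofReal_add_mul_exp]
  · positivity
  · have := mul_pos (mul_pos (sub_pos.2 hac) hb) hsin
    linarith

lemma theta_nonneg (hθ : 0 ≤ θ) (hθπ : θ ≤ Real.pi) (a : ℝ) {b : ℝ} (hb : 0 ≤ b) :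
    0 ≤ Theta θ a b := by
  rw [Theta, Complex.arg_nonneg_iff, im_ofReal_add_mul_exp]
  exact mul_nonneg hb (Real.sin_nonneg_of_nonneg_of_le_pi hθ hθπ)

lemma theta_mul_mul (θ : ℝ) {r : ℝ} (hr : 0 < r) (a b : ℝ) :
    Theta θ (r * a) (r * b) = Theta θ a b := by
  rw [Theta, Theta, ← Complex.arg_real_mul (a + _) hr]
  push_cast
  ring_nf

lemma theta_zero_left (hθ : 0 ≤ θ) (hθπ : θ ≤ Real.pi) {b : ℝ} (hb : 0 < b) :
    Theta θ 0 b = θ := by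
  rw [Theta, Complex.ofReal_zero, zero_add, Complex.exp_mul_I]
  exact Complex.arg_mul_cos_add_sin_mul_I hb ⟨by linarith [Real.pi_pos], hθπ⟩

lemma theta_le (hθ : 0 < θ) (hθπ : θ < Real.pi) {a b : ℝ} (ha : 0 ≤ a) (hb : 0 < b) :
    Theta θ a b ≤ θ :=
  ((strictAnti_theta_left hθ hθπ hb).antitone ha).trans_eq (theta_zero_left hθ.le hθπ.le hb)

lemma theta_self (hθ : -Real.pi < θ) (hθπ : θ < Real.pi) {a : ℝ} (ha : 0 < a) :
    Theta θ a a = θ / 2 := by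
  have hcos : 0 < Real.cos (θ / 2) := Real.cos_pos_of_mem_Ioo ⟨by linarith, by linarith⟩
  have hpolar : (a : ℂ) + a * Complex.exp (θ * Complex.I) =
      (a * (2 * Real.cos (θ / 2)) : ℝ) * Complex.exp ((θ / 2 : ℝ) * Complex.I) := by
    have hsq : Complex.exp (θ * Complex.I) = Complex.exp ((θ / 2 : ℝ) * Complex.I) ^ 2 := by
      rw [← Complex.exp_nat_mul]; push_cast; ring_nf
    push_cast at hsq ⊢
    rw [Complex.two_cos, hsq, neg_mul, Complex.exp_neg]
    field_simp
    ring
  rw [Theta, hpolar, Complex.exp_mul_I]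
  exact Complex.arg_mul_cos_add_sin_mul_I (by positivity) ⟨by linarith, by linarith⟩

lemma abs_theta_le (t : ℝ) {a b : ℝ} (ha : 0 < a) (hb : 0 ≤ b) :
    |Theta t a b| ≤ 2 * Real.pi * (b / a) := by
  simpa [Theta, Complex.norm_exp_ofReal_mul_I, abs_of_nonneg hb] using
    abs_arg_ofReal_add_le ha (b * Complex.exp (t * Complex.I))

lemma measurable_theta_left (t b : ℝ) : Measurable (Theta t · b) :=
  Complex.measurable_arg.comp (by fun_prop)

end Theta

section LogIntegral

open Complex

lemma norm_ofReal_add_sq (x : ℝ) (z : ℂ) :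
    ‖(x : ℂ) + z‖ ^ 2 =
      (Real.cos (arg z / 2) * (x + ‖z‖)) ^ 2 + (Real.sin (arg z / 2) * (x - ‖z‖)) ^ 2 := by
  have hcos := Real.cos_sq (arg z / 2)
  have hsin := Real.sin_sq (arg z / 2)
  have hre := norm_mul_cos_arg z
  have hnorm : ‖z‖ ^ 2 = z.re ^ 2 + z.im ^ 2 := by rw [Complex.sq_norm, normSq_apply]; ring
  have hnorm' : ‖(x : ℂ) + z‖ ^ 2 = (x + z.re) ^ 2 + z.im ^ 2 := by
    rw [Complex.sq_norm, normSq_apply, add_re, add_im, ofReal_re, ofReal_im]; ring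
  rw [hnorm', mul_pow, mul_pow, hsin, hcos, mul_div_cancel₀ _ two_ne_zero]
  linear_combination -hnorm - 2 * x * hre

lemma exists_mul_one_add_le_norm_ofReal_add {z : ℂ} (hz : z ∈ slitPlane) :
    ∃ c > 0, ∀ x : ℝ, 0 ≤ x → c * (1 + x) ≤ ‖(x : ℂ) + z‖ := by
  have hnorm : 0 < ‖z‖ := norm_pos_iff.2 (slitPlane_ne_zero hz)
  have hcos : 0 < Real.cos (arg z / 2) := Real.cos_pos_of_mem_Ioo
    ⟨by linarith [neg_pi_lt_arg z],
      by linarith [(arg_le_pi z).lt_of_ne (mem_slitPlane_iff_arg.1 hz).1]⟩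
  refine ⟨Real.cos (arg z / 2) * min 1 ‖z‖, by positivity, fun x hx => ?_⟩
  calc Real.cos (arg z / 2) * min 1 ‖z‖ * (1 + x)
      = Real.cos (arg z / 2) * (min 1 ‖z‖ * x + min 1 ‖z‖) := by ring
    _ ≤ Real.cos (arg z / 2) * (1 * x + ‖z‖) := by
        gcongr <;> simp only [min_le_left, min_le_right]
    _ = Real.cos (arg z / 2) * (x + ‖z‖) := by rw [one_mul]
    _ ≤ ‖(x : ℂ) + z‖ := by
        rw [← pow_le_pow_iff_left₀ (by positivity) (norm_nonneg _) two_ne_zero,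
          norm_ofReal_add_sq]
        exact le_add_of_nonneg_right (sq_nonneg _)

lemma exists_nhds_mul_one_add_le_norm_ofReal_add {z : ℂ} (hz : z ∈ slitPlane) :
    ∃ c > 0, ∃ U ∈ 𝓝 z, U ⊆ slitPlane ∧
      ∀ w ∈ U, ∀ x : ℝ, 0 ≤ x → c * (1 + x) ≤ ‖(x : ℂ) + w‖ := by
  obtain ⟨c, hc, hcz⟩ := exists_mul_one_add_le_norm_ofReal_add hz
  refine ⟨c / 2, half_pos hc, Metric.ball z (c / 2) ∩ slitPlane,
    inter_mem (Metric.ball_mem_nhds z (half_pos hc)) (isOpen_slitPlane.mem_nhds hz),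
    Set.inter_subset_right, fun w hw x hx => ?_⟩
  have hdist : ‖w - z‖ < c / 2 := mem_ball_iff_norm.1 hw.1
  have htri : ‖(x : ℂ) + z‖ ≤ ‖(x : ℂ) + w‖ + ‖w - z‖ :=
    (congrArg norm (by ring)).trans_le (norm_sub_le ((x : ℂ) + w) (w - z))
  nlinarith [hcz x hx]

lemma integrableOn_inv_one_add_rpow {α : ℝ} (hα : 1 < α) :
    IntegrableOn (fun s : ℝ => (1 + s ^ α)⁻¹) (Set.Ioi 0) := by
  have hmeas : Measurable fun s : ℝ => (1 + s ^ α)⁻¹ := by fun_prop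
  rw [← Set.Ioc_union_Ioi_eq_Ioi zero_le_one]
  refine .union (Measure.integrableOn_of_bounded (M := 1) (by simp)
    hmeas.aestronglyMeasurable ?_) (Integrable.mono'
      (integrableOn_Ioi_rpow_of_lt (neg_lt_neg hα) one_pos) hmeas.aestronglyMeasurable ?_)
  · filter_upwards [ae_restrict_mem measurableSet_Ioc] with s hs
    have := Real.rpow_pos_of_pos hs.1 α
    rw [Real.norm_of_nonneg (by positivity)]
    exact inv_le_one_of_one_le₀ (by linarith)
  · filter_upwards [ae_restrict_mem measurableSet_Ioi] with s hs
    have hs0 : 0 < s := one_pos.trans hs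
    have := Real.rpow_pos_of_pos hs0 α
    rw [Real.norm_of_nonneg (by positivity), Real.rpow_neg hs0.le]
    exact inv_anti₀ this (by linarith)

/-- The function `s ↦ log (s ^ α + z) - log (s ^ α)`, whose imaginary part at `z = exp (i t)` is
`Theta t (s ^ α) 1`. -/
noncomputable def logIntegrand (α : ℝ) (z : ℂ) (s : ℝ) : ℂ :=
  log ((s ^ α : ℝ) + z) - Real.log (s ^ α)

/-- The holomorphic function `z ↦ ∫₀^∞ (log (s ^ α + z) - log (s ^ α)) ds` on the slit plane; its
imaginary part on the unit circle is the integral defining the drift. -/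
noncomputable def logIntegral (α : ℝ) (z : ℂ) : ℂ :=
  ∫ s in Set.Ioi (0 : ℝ), logIntegrand α z s

lemma measurable_logIntegrand (α : ℝ) (z : ℂ) : Measurable (logIntegrand α z) := by
  unfold logIntegrand
  fun_prop

lemma integrableOn_logIntegrand_Ioc {α : ℝ} (hα : 0 < α) {z : ℂ} (hz : z ∈ slitPlane) {R : ℝ}
    (hR : 0 ≤ R) : IntegrableOn (logIntegrand α z) (Set.Ioc 0 R) := by
  have hlog : IntegrableOn (fun s : ℝ => ((α * Real.log s : ℝ) : ℂ)) (Set.Ioc 0 R) :=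
    ((intervalIntegrable_iff_integrableOn_Ioc_of_le hR).1
      intervalIntegral.intervalIntegrable_log').const_mul α |>.ofReal
  have hclog : IntegrableOn (fun s : ℝ => log ((s ^ α : ℝ) + z)) (Set.Ioc 0 R) := by
    refine IntegrableOn.mono_set (ContinuousOn.integrableOn_Icc ?_) Set.Ioc_subset_Icc_self
    refine ContinuousOn.clog (.add (continuous_ofReal.comp
      (Real.continuous_rpow_const hα.le)).continuousOn continuousOn_const) fun s hs => ?_
    exact add_mem_slitPlane hz (Real.rpow_nonneg hs.1 α)
  refine (hclog.sub hlog).congr_fun (fun s hs => ?_) measurableSet_Ioc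
  simp only [logIntegrand, Pi.sub_apply, Real.log_rpow hs.1]

lemma integrableOn_logIntegrand_Ioi {α : ℝ} (hα : 1 < α) (z : ℂ) {R : ℝ} (hR : 0 < R)
    (hzR : 2 * ‖z‖ ≤ R ^ α) : IntegrableOn (logIntegrand α z) (Set.Ioi R) := by
  refine Integrable.mono' ((integrableOn_Ioi_rpow_of_lt (neg_lt_neg hα) hR).const_mul
    (3 / 2 * ‖z‖)) (measurable_logIntegrand α z).aestronglyMeasurable ?_
  filter_upwards [ae_restrict_mem measurableSet_Ioi] with s hs
  have hs0 : 0 < s := hR.trans hs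
  have hle : R ^ α ≤ s ^ α := Real.rpow_le_rpow hR.le (le_of_lt hs) (by linarith)
  refine (norm_log_ofReal_add_sub_log_le (Real.rpow_pos_of_pos hs0 α)
    (hzR.trans hle)).trans_eq ?_
  rw [Real.rpow_neg hs0.le]
  ring

lemma integrableOn_logIntegrand {α : ℝ} (hα : 1 < α) {z : ℂ} (hz : z ∈ slitPlane) :
    IntegrableOn (logIntegrand α z) (Set.Ioi 0) := by
  have hα0 : 0 < α := one_pos.trans hα
  obtain ⟨R, hzR, hR⟩ := (((tendsto_rpow_atTop hα0).eventually_ge_atTop (2 * ‖z‖)).and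
    (eventually_gt_atTop 0)).exists
  rw [← Set.Ioc_union_Ioi_eq_Ioi hR.le]
  exact (integrableOn_logIntegrand_Ioc hα0 hz hR.le).union
    (integrableOn_logIntegrand_Ioi hα z hR hzR)

lemma differentiableOn_logIntegral {α : ℝ} (hα : 1 < α) :
    DifferentiableOn ℂ (logIntegral α) slitPlane := by
  intro z hz
  obtain ⟨c, hc, U, hU, hUslit, hUc⟩ := exists_nhds_mul_one_add_le_norm_ofReal_add hz
  refine (hasDerivAt_integral_of_dominated_loc_of_deriv_le (F := logIntegrand α)
    (F' := fun w s => 1 / ((s ^ α : ℝ) + w)) (bound := fun s => c⁻¹ * (1 + s ^ α)⁻¹) hU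
    (.of_forall fun w => (measurable_logIntegrand α w).aestronglyMeasurable)
    (integrableOn_logIntegrand hα hz) (Measurable.aestronglyMeasurable (by fun_prop)) ?_
    ((integrableOn_inv_one_add_rpow hα).const_mul _)
    ?_).2.differentiableAt.differentiableWithinAt
  · filter_upwards [ae_restrict_mem measurableSet_Ioi] with s hs w hw
    have hpow := Real.rpow_pos_of_pos hs α
    rw [norm_div, norm_one, one_div, ← mul_inv]
    exact inv_anti₀ (by positivity) (hUc w hw _ hpow.le)
  · filter_upwards [ae_restrict_mem measurableSet_Ioi] with s hs w hw
    exact (((hasDerivAt_id w).const_add _).clog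
      (add_mem_slitPlane (hUslit hw) (Real.rpow_pos_of_pos hs α).le)).sub_const _

lemma logIntegrand_rpow_mul {α r s : ℝ} (hr : 0 < r) (hs : 0 < s) {z : ℂ} (hz : z ∈ slitPlane) :
    logIntegrand α ((r ^ α : ℝ) * z) (r * s) = logIntegrand α z s := by
  have hrpow := Real.rpow_pos_of_pos hr α
  have hspow := Real.rpow_pos_of_pos hs α
  rw [logIntegrand, logIntegrand, Real.mul_rpow hr.le hs.le, ofReal_mul, ← mul_add,
    log_ofReal_mul hrpow (slitPlane_ne_zero (add_mem_slitPlane hz hspow.le)),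
    Real.log_mul hrpow.ne' hspow.ne', ofReal_add, add_sub_add_left_eq_sub]

lemma logIntegral_rpow_mul {α r : ℝ} (hr : 0 < r) {z : ℂ} (hz : z ∈ slitPlane) :
    logIntegral α ((r ^ α : ℝ) * z) = r * logIntegral α z := by
  have hscale := integral_comp_mul_left_Ioi' (logIntegrand α ((r ^ α : ℝ) * z)) 0 hr
  rw [mul_zero] at hscale
  rw [logIntegral, ← hscale, real_smul]
  congr 1
  exact setIntegral_congr_fun measurableSet_Ioi fun s hs => logIntegrand_rpow_mul hr hs hz

lemma logIntegral_eq_cpow_mul {α : ℝ} (hα : 1 < α) {z : ℂ} (hz : z ∈ slitPlane) :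
    logIntegral α z = z ^ (α⁻¹ : ℂ) * logIntegral α 1 := by
  have hG := (differentiableOn_logIntegral hα).analyticOnNhd isOpen_slitPlane
  have hcpow : AnalyticOnNhd ℂ (fun z => z ^ (α⁻¹ : ℂ) * logIntegral α 1) slitPlane :=
    DifferentiableOn.analyticOnNhd (fun w hw => by fun_prop (disch := exact hw)) isOpen_slitPlane
  have hreal : ∀ᶠ r : ℝ in 𝓝[≠] 1,
      logIntegral α r = (r : ℂ) ^ (α⁻¹ : ℂ) * logIntegral α 1 := by
    filter_upwards [nhdsWithin_le_nhds (lt_mem_nhds one_pos)] with r hr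
    have hroot := logIntegral_rpow_mul (α := α) (Real.rpow_pos_of_pos hr α⁻¹) one_mem_slitPlane
    rwa [← Real.rpow_mul hr.le, inv_mul_cancel₀ (by linarith), Real.rpow_one, mul_one,
      ofReal_cpow hr.le, ofReal_inv] at hroot
  have hofReal : Tendsto ((↑) : ℝ → ℂ) (𝓝[≠] 1) (𝓝[≠] 1) :=
    tendsto_nhdsWithin_iff.2 ⟨(continuous_ofReal.tendsto' 1 1 ofReal_one).mono_left
      nhdsWithin_le_nhds, eventually_mem_nhdsWithin.mono fun r hr => ofReal_ne_one.2 hr⟩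
  exact hG.eqOn_of_preconnected_of_frequently_eq hcpow
    (starConvex_one_slitPlane.isPathConnected
      one_mem_slitPlane).isConnected.isPreconnected one_mem_slitPlane
    (hofReal.frequently hreal.frequently) hz

end LogIntegral

section Drift

variable {θ α : ℝ}

lemma theta_zero_angle {a b : ℝ} (hab : 0 ≤ a + b) : Theta 0 a b = 0 := by
  rw [Theta, Complex.ofReal_zero, zero_mul, Complex.exp_zero, mul_one, ← Complex.ofReal_add,
    Complex.arg_ofReal_of_nonneg hab]

lemma theta_pi (a b : ℝ) : Theta Real.pi a b = if a < b then Real.pi else 0 := by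
  rw [Theta, Complex.exp_pi_mul_I, mul_neg_one, ← sub_eq_add_neg, ← Complex.ofReal_sub]
  split_ifs with hab
  · exact Complex.arg_ofReal_of_neg (sub_neg.2 hab)
  · exact Complex.arg_ofReal_of_nonneg (sub_nonneg.2 (not_lt.1 hab))

lemma continuousWithinAt_theta_pi {a b : ℝ} (hb : 0 ≤ b) (hab : a ≠ b) :
    ContinuousWithinAt (Theta · a b) (Set.Icc 0 Real.pi) Real.pi := by
  have hpath : Continuous fun t : ℝ => (a : ℂ) + b * Complex.exp (t * Complex.I) := by fun_prop
  have hval : (a : ℂ) + b * Complex.exp (Real.pi * Complex.I) = (a - b : ℝ) := by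
    rw [Complex.exp_pi_mul_I, mul_neg_one, ← sub_eq_add_neg, Complex.ofReal_sub]
  have hmaps : Set.MapsTo (fun t : ℝ => (a : ℂ) + b * Complex.exp (t * Complex.I))
      (Set.Icc 0 Real.pi) {z | 0 ≤ z.im} := fun t ht => by
    rw [Set.mem_ofPred_eq, im_ofReal_add_mul_exp]
    exact mul_nonneg hb (Real.sin_nonneg_of_mem_Icc ht)
  refine ContinuousWithinAt.comp (g := Complex.arg) (t := {z | 0 ≤ z.im}) ?_
    hpath.continuousWithinAt hmaps
  rw [hval]
  rcases hab.lt_or_gt with hab | hab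
  · exact Complex.continuousWithinAt_arg_of_re_neg_of_im_zero (by simpa using hab) (by simp)
  · exact (Complex.continuousAt_arg (.inl (by simpa using hab))).continuousWithinAt

lemma abs_theta_rpow_one_le (t α : ℝ) {s : ℝ} (hs : 0 < s) :
    |Theta t (s ^ α) 1| ≤ 4 * Real.pi * (1 + s ^ α)⁻¹ := by
  have hpow := Real.rpow_pos_of_pos hs α
  have hlarge := abs_theta_le t hpow zero_le_one
  have hsmall : |Theta t (s ^ α) 1| ≤ Real.pi := Complex.abs_arg_le_pi _
  rw [one_div, ← div_eq_mul_inv, le_div_iff₀ hpow] at hlarge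
  rw [← div_eq_mul_inv, le_div_iff₀ (by positivity)]
  linarith [Real.pi_pos]

lemma measurable_theta_rpow_one (t α : ℝ) : Measurable fun s : ℝ => Theta t (s ^ α) 1 :=
  (measurable_theta_left t 1).comp (by fun_prop)

lemma integrableOn_theta_rpow_one (t : ℝ) (hα : 1 < α) :
    IntegrableOn (fun s : ℝ => Theta t (s ^ α) 1) (Set.Ioi 0) :=
  Integrable.mono' ((integrableOn_inv_one_add_rpow hα).const_mul (4 * Real.pi))
    (measurable_theta_rpow_one t α).aestronglyMeasurable
    ((ae_restrict_mem measurableSet_Ioi).mono fun _ hs => abs_theta_rpow_one_le t α hs)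

lemma integral_theta_rpow_one_eq_im_logIntegral (hα : 1 < α) {t : ℝ} (ht : 0 ≤ t)
    (htπ : t < Real.pi) : ∫ s in Set.Ioi (0 : ℝ), Theta t (s ^ α) 1 =
      (logIntegral α (Complex.exp (t * Complex.I))).im := by
  have him (s : ℝ) : (logIntegrand α (Complex.exp (t * Complex.I)) s).im = Theta t (s ^ α) 1 := by
    rw [logIntegrand, Complex.sub_im, Complex.log_im, Complex.ofReal_im, sub_zero, Theta,
      Complex.ofReal_one, one_mul]
  simpa only [RCLike.im_to_complex, him, logIntegral] using
    integral_im (integrableOn_logIntegrand hα (exp_mul_I_mem_slitPlane ht htπ))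

lemma logIntegral_one_im (hα : 1 < α) : (logIntegral α 1).im = 0 := by
  have h := integral_theta_rpow_one_eq_im_logIntegral hα le_rfl Real.pi_pos
  rw [Complex.ofReal_zero, zero_mul, Complex.exp_zero] at h
  rw [← h]
  exact setIntegral_eq_zero_of_forall_eq_zero fun s hs =>
    theta_zero_angle (add_nonneg (Real.rpow_pos_of_pos hs α).le zero_le_one)

lemma integral_theta_rpow_one_eq_mul_sin (hα : 1 < α) {t : ℝ} (ht : 0 ≤ t) (htπ : t < Real.pi) :
    ∫ s in Set.Ioi (0 : ℝ), Theta t (s ^ α) 1 = (logIntegral α 1).re * Real.sin (t / α) := by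
  have hcpow : Complex.exp (t * Complex.I) ^ (α⁻¹ : ℂ) =
      Complex.exp ((t / α : ℝ) * Complex.I) := by
    rw [Complex.cpow_def_of_ne_zero (Complex.exp_ne_zero _), Complex.log_exp
      (by simpa using (neg_neg_of_pos Real.pi_pos).trans_le ht) (by simpa using htπ.le)]
    push_cast
    ring_nf
  rw [integral_theta_rpow_one_eq_im_logIntegral hα ht htπ,
    logIntegral_eq_cpow_mul hα (exp_mul_I_mem_slitPlane ht htπ), hcpow, Complex.mul_im,
    logIntegral_one_im hα, Complex.exp_ofReal_mul_I_im]
  ring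

lemma integral_theta_pi_rpow_one (hα : 0 < α) :
    ∫ s in Set.Ioi (0 : ℝ), Theta Real.pi (s ^ α) 1 = Real.pi := by
  have hind : Set.EqOn (fun s : ℝ => Theta Real.pi (s ^ α) 1)
      ((Set.Ioo (0 : ℝ) 1).indicator fun _ => Real.pi) (Set.Ioi 0) := fun s (hs : 0 < s) => by
    simp only [theta_pi, Set.indicator_apply, Set.mem_Ioo, hs, true_and,
      Real.rpow_lt_one_iff_of_pos hs, hα, hα.not_gt, and_false, false_or, and_true]
  rw [setIntegral_congr_fun measurableSet_Ioi hind, setIntegral_indicator measurableSet_Ioo,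
    Set.inter_eq_right.2 Set.Ioo_subset_Ioi_self]
  simp

lemma continuousWithinAt_integral_theta_rpow_one_pi (hα : 1 < α) :
    ContinuousWithinAt (fun t => ∫ s in Set.Ioi (0 : ℝ), Theta t (s ^ α) 1)
      (Set.Icc 0 Real.pi) Real.pi := by
  refine continuousWithinAt_of_dominated
    (.of_forall fun t => (measurable_theta_rpow_one t α).aestronglyMeasurable)
    (.of_forall fun t => (ae_restrict_mem measurableSet_Ioi).mono fun s hs =>
      abs_theta_rpow_one_le t α hs)
    ((integrableOn_inv_one_add_rpow hα).const_mul (4 * Real.pi)) ?_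
  filter_upwards [ae_restrict_mem measurableSet_Ioi, ae_restrict_of_ae (Measure.ae_ne volume 1)]
    with s hs hs1
  refine continuousWithinAt_theta_pi zero_le_one fun hpow => hs1 ?_
  exact (Real.rpow_left_inj (le_of_lt hs) zero_le_one (by linarith)).1
    (hpow.trans (Real.one_rpow α).symm)

lemma logIntegral_one_re_mul_sin (hα : 1 < α) :
    (logIntegral α 1).re * Real.sin (Real.pi / α) = Real.pi := by
  have hint := (continuousWithinAt_integral_theta_rpow_one_pi hα).mono Set.Ico_subset_Icc_self
  have hsin : ContinuousWithinAt (fun t => (logIntegral α 1).re * Real.sin (t / α))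
      (Set.Ico 0 Real.pi) Real.pi := by fun_prop
  have : (𝓝[Set.Ico 0 Real.pi] Real.pi).NeBot := right_nhdsWithin_Ico_neBot Real.pi_pos
  have hlim := tendsto_nhds_unique_of_eventuallyEq hint hsin (eventually_mem_nhdsWithin.mono
    fun t ht => integral_theta_rpow_one_eq_mul_sin hα ht.1 ht.2)
  exact hlim.symm.trans (integral_theta_pi_rpow_one (one_pos.trans hα))

lemma drift_eq_sin_div_sin (hα : 1 < α) (hθ : 0 ≤ θ) (hθπ : θ < Real.pi) :
    Drift θ α = Real.sin (θ / α) / Real.sin (Real.pi / α) := by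
  have hre := logIntegral_one_re_mul_sin hα
  have hsin : Real.sin (Real.pi / α) ≠ 0 := right_ne_zero_of_mul (hre ▸ Real.pi_ne_zero)
  rw [Drift, integral_theta_rpow_one_eq_mul_sin hα hθ hθπ, eq_div_of_mul_eq hsin hre]
  field_simp

lemma drift_one_add_div_pi (hθ : 0 < θ) (hθπ : θ < Real.pi) :
    Drift θ (1 + θ / Real.pi) = 1 := by
  have hα : 1 < 1 + θ / Real.pi := lt_add_of_pos_right 1 (div_pos hθ Real.pi_pos)
  have hangle : θ / (1 + θ / Real.pi) = Real.pi - Real.pi / (1 + θ / Real.pi) := by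
    field_simp
    ring
  have hsin : 0 < Real.sin (Real.pi / (1 + θ / Real.pi)) := Real.sin_pos_of_pos_of_lt_pi
    (by positivity) (div_lt_self Real.pi_pos hα)
  rw [drift_eq_sin_div_sin hα hθ.le hθπ, hangle, Real.sin_pi_sub, div_self hsin.ne']

end Drift

section Sums

variable {θ α c : ℝ}

lemma theta_rpow_rpow (θ α : ℝ) (hc : 0 < c) {s : ℝ} (hs : 0 ≤ s) :
    Theta θ (s ^ α) (c ^ α) = Theta θ ((c⁻¹ * s) ^ α) 1 := by
  rw [← theta_mul_mul θ (Real.rpow_pos_of_pos hc α) ((c⁻¹ * s) ^ α) 1, mul_one,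
    ← Real.mul_rpow hc.le (by positivity), mul_inv_cancel_left₀ hc.ne']

lemma integrableOn_theta_rpow (θ : ℝ) (hα : 1 < α) (hc : 0 < c) :
    IntegrableOn (fun s : ℝ => Theta θ (s ^ α) (c ^ α)) (Set.Ioi 0) := by
  have hscale : IntegrableOn (fun s : ℝ => Theta θ ((c⁻¹ * s) ^ α) 1) (Set.Ioi 0) :=
    (integrableOn_Ioi_comp_mul_left_iff (fun s => Theta θ (s ^ α) 1) 0 (inv_pos.2 hc)).2
      (by simpa only [mul_zero] using integrableOn_theta_rpow_one θ hα)
  exact hscale.congr_fun (fun s hs => (theta_rpow_rpow θ α hc (le_of_lt hs)).symm)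
    measurableSet_Ioi

lemma integral_theta_rpow (θ α : ℝ) (hc : 0 < c) :
    ∫ s in Set.Ioi (0 : ℝ), Theta θ (s ^ α) (c ^ α) = c * Real.pi * Drift θ α := by
  have hscale := integral_comp_mul_left_Ioi (fun s => Theta θ (s ^ α) 1) 0 (inv_pos.2 hc)
  rw [mul_zero, inv_inv, smul_eq_mul] at hscale
  rw [setIntegral_congr_fun measurableSet_Ioi fun s hs => theta_rpow_rpow θ α hc (le_of_lt hs),
    hscale, Drift]
  field_simp

lemma antitoneOn_theta_rpow (hθ : 0 < θ) (hθπ : θ < Real.pi) (hα : 0 ≤ α) (hc : 0 < c) :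
    AntitoneOn (fun s : ℝ => Theta θ (s ^ α) (c ^ α)) (Set.Ici 0) := fun _ hs _ _ hst =>
  (strictAnti_theta_left hθ hθπ (Real.rpow_pos_of_pos hc α)).antitone
    (Real.rpow_le_rpow hs hst hα)

lemma summable_theta_rpow (hθ : 0 < θ) (hθπ : θ < Real.pi) (hα : 1 < α) (hc : 0 < c) :
    Summable fun k : ℕ => Theta θ ((k : ℝ) ^ α) (c ^ α) :=
  (antitoneOn_theta_rpow hθ hθπ (by linarith) hc).summable_of_integrableOn_Ioi_zero
    (integrableOn_theta_rpow θ hα hc)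
    fun s _ => theta_nonneg hθ.le hθπ.le (s ^ α) (Real.rpow_nonneg hc.le α)

lemma tsum_theta_rpow_add_one_le (hθ : 0 < θ) (hθπ : θ < Real.pi) (hα : 1 < α) (hc : 0 < c) :
    ∑' k : ℕ, Theta θ (((k + 1 : ℕ) : ℝ) ^ α) (c ^ α) ≤ c * Real.pi * Drift θ α := by
  rw [← integral_theta_rpow θ α hc]
  exact (antitoneOn_theta_rpow hθ hθπ (by linarith) hc).tsum_add_one_le_integral
    (integrableOn_theta_rpow θ hα hc)
    fun s _ => theta_nonneg hθ.le hθπ.le (s ^ α) (Real.rpow_nonneg hc.le α)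

lemma sub_le_tsum_theta_rpow_add (hθ : 0 < θ) (hθπ : θ < Real.pi) (hα : 1 < α) (hc : 0 < c)
    (N : ℕ) : c * Real.pi * Drift θ α - N * θ ≤
      ∑' k : ℕ, Theta θ (((k + N : ℕ) : ℝ) ^ α) (c ^ α) := by
  have hsum := summable_theta_rpow hθ hθπ hα hc
  have hint := (antitoneOn_theta_rpow hθ hθπ (by linarith) hc).integral_le_tsum hsum
    fun s _ => theta_nonneg hθ.le hθπ.le (s ^ α) (Real.rpow_nonneg hc.le α)
  have hhead : ∑ k ∈ Finset.range N, Theta θ ((k : ℝ) ^ α) (c ^ α) ≤ N * θ := by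
    simpa using Finset.sum_le_card_nsmul (Finset.range N) _ θ fun k _ =>
      theta_le hθ hθπ (Real.rpow_nonneg k.cast_nonneg α) (Real.rpow_pos_of_pos hc α)
  rw [integral_theta_rpow θ α hc, ← hsum.sum_add_tsum_nat_add N] at hint
  linarith

end Sums

section Comparison

variable {θ : ℝ} {Q X Y Z : ℕ → ℝ} {j : ℕ}

lemma phi_eq_ofReal (hθ : 0 ≤ θ) (hθπ : θ ≤ Real.pi) (hY : 0 ≤ Y j)
    (hsum : Summable fun k : ℕ => Theta θ (X (k + 1)) (Y j)) :
    phi θ X Y j = ENNReal.ofReal (1 / Real.pi * ∑' k : ℕ, Theta θ (X (k + 1)) (Y j)) := by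
  rw [phi, ENNReal.ofReal_mul (one_div_pos.2 Real.pi_pos).le,
    ENNReal.ofReal_tsum_of_nonneg (fun k => theta_nonneg hθ hθπ _ hY) hsum]

lemma phi_le_phi_of_le (hθ : 0 < θ) (hθπ : θ < Real.pi) (hY : 0 < Y j)
    (hXZ : ∀ k, 1 ≤ k → X k ≤ Z k) : phi θ Z Y j ≤ phi θ X Y j := by
  unfold phi
  gcongr with k
  exact (strictAnti_theta_left hθ hθπ hY).antitone (hXZ _ k.succ_pos)

lemma phi_lt_phi_of_lt (hθ : 0 < θ) (hθπ : θ < Real.pi) (hX : ∀ k, 1 ≤ k → 0 < X k)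
    (hY : 0 ≤ Y j) (hYZ : Y j < Z j) (hfin : phi θ X Z j ≠ ⊤) : phi θ X Y j < phi θ X Z j := by
  have hlt (k : ℕ) : Theta θ (X (k + 1)) (Y j) < Theta θ (X (k + 1)) (Z j) :=
    strictMonoOn_theta_right hθ hθπ (hX _ k.succ_pos) hY (hY.trans hYZ.le) hYZ
  have hle (k : ℕ) := ENNReal.ofReal_le_ofReal (hlt k).le
  have hπ : ENNReal.ofReal (1 / Real.pi) ≠ 0 :=
    (ENNReal.ofReal_pos.2 (one_div_pos.2 Real.pi_pos)).ne'
  unfold phi at hfin ⊢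
  rw [ENNReal.mul_lt_mul_iff_right hπ ENNReal.ofReal_ne_top]
  refine ENNReal.tsum_lt_tsum (i := 0) ?_ hle ?_
  · exact ne_top_of_le_ne_top (fun htop => hfin (by rw [htop, ENNReal.mul_top hπ]))
      (ENNReal.tsum_le_tsum hle)
  · exact (ENNReal.ofReal_lt_ofReal_iff_of_nonneg (theta_nonneg hθ.le hθπ.le _ hY)).2 (hlt 0)

/-- A sequence `Z` with `φ_j(Z, Z) ≥ Q_j` for all `j ≥ 1`; it is an upper barrier for the solutions
`X ↦ Y` of `φ_j(X, Y) = Q_j`. -/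
def IsSupersolution (θ : ℝ) (Q Z : ℕ → ℝ) : Prop :=
  ∀ j, 1 ≤ j → ENNReal.ofReal (Q j) ≤ phi θ Z Z j

/-- A sequence `Z` with `φ_j(Z, Z) ≤ Q_j` for all `j ≥ 1`; it is a lower barrier for the solutions
`X ↦ Y` of `φ_j(X, Y) = Q_j`. -/
def IsSubsolution (θ : ℝ) (Q Z : ℕ → ℝ) : Prop :=
  ∀ j, 1 ≤ j → phi θ Z Z j ≤ ENNReal.ofReal (Q j)

lemma phi_const_mul (θ : ℝ) {r : ℝ} (hr : 0 < r) (Z : ℕ → ℝ) (j : ℕ) :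
    phi θ (fun k => r * Z k) (fun k => r * Z k) j = phi θ Z Z j := by
  simp only [phi, theta_mul_mul θ hr]

lemma IsSupersolution.const_mul {r : ℝ} (hr : 0 < r) (hZ : IsSupersolution θ Q Z) :
    IsSupersolution θ Q fun k => r * Z k :=
  fun j hj => (hZ j hj).trans_eq (phi_const_mul θ hr Z j).symm

lemma IsSubsolution.const_mul {r : ℝ} (hr : 0 < r) (hZ : IsSubsolution θ Q Z) :
    IsSubsolution θ Q fun k => r * Z k :=
  fun j hj => (phi_const_mul θ hr Z j).trans_le (hZ j hj)

lemma IsSupersolution.le_of_phi_eq (hθ : 0 < θ) (hθπ : θ < Real.pi) (hZ : IsSupersolution θ Q Z)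
    (hX : ∀ k, 1 ≤ k → 0 < X k) (hXZ : ∀ k, 1 ≤ k → X k ≤ Z k)
    (hXY : ∀ j, 1 ≤ j → phi θ X Y j = ENNReal.ofReal (Q j)) : ∀ j, 1 ≤ j → Y j ≤ Z j := by
  intro j hj
  by_contra! hlt
  have hZj : 0 < Z j := (hX j hj).trans_le (hXZ j hj)
  refine (phi_lt_phi_of_lt hθ hθπ hX hZj.le hlt ((hXY j hj).trans_ne ENNReal.ofReal_ne_top)).not_ge
    ?_
  calc phi θ X Y j = ENNReal.ofReal (Q j) := hXY j hj
    _ ≤ phi θ Z Z j := hZ j hj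
    _ ≤ phi θ X Z j := phi_le_phi_of_le hθ hθπ hZj hXZ

lemma IsSubsolution.le_of_phi_eq (hθ : 0 < θ) (hθπ : θ < Real.pi) (hZ : IsSubsolution θ Q Z)
    (hX : ∀ k, 1 ≤ k → 0 < X k) (hY : ∀ k, 1 ≤ k → 0 < Y k) (hZX : ∀ k, 1 ≤ k → Z k ≤ X k)
    (hXY : ∀ j, 1 ≤ j → phi θ X Y j = ENNReal.ofReal (Q j)) : ∀ j, 1 ≤ j → Z j ≤ Y j := by
  intro j hj
  by_contra! hlt
  have hle : phi θ X Z j ≤ phi θ X Y j :=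
    calc phi θ X Z j ≤ phi θ Z Z j := phi_le_phi_of_le hθ hθπ ((hY j hj).trans hlt) hZX
      _ ≤ ENNReal.ofReal (Q j) := hZ j hj
      _ = phi θ X Y j := (hXY j hj).symm
  exact (phi_lt_phi_of_lt hθ hθπ hX (hY j hj).le hlt (ne_top_of_le_ne_top
    ((hXY j hj).trans_ne ENNReal.ofReal_ne_top) hle)).not_ge hle

lemma IsSupersolution.orbit_le {X : ℕ → ℕ → ℝ} (hθ : 0 < θ) (hθπ : θ < Real.pi)
    (hZ : IsSupersolution θ Q Z) (hX : ∀ n, ∀ k, 1 ≤ k → 0 < X n k)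
    (hX0 : ∀ k, 1 ≤ k → X 0 k ≤ Z k)
    (hstep : ∀ n, ∀ j, 1 ≤ j → phi θ (X n) (X (n + 1)) j = ENNReal.ofReal (Q j)) (n : ℕ) :
    ∀ k, 1 ≤ k → X n k ≤ Z k := by
  induction n with
  | zero => exact hX0
  | succ n ih => exact hZ.le_of_phi_eq hθ hθπ (hX n) ih (hstep n)

lemma IsSubsolution.le_orbit {X : ℕ → ℕ → ℝ} (hθ : 0 < θ) (hθπ : θ < Real.pi)
    (hZ : IsSubsolution θ Q Z) (hX : ∀ n, ∀ k, 1 ≤ k → 0 < X n k)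
    (hX0 : ∀ k, 1 ≤ k → Z k ≤ X 0 k)
    (hstep : ∀ n, ∀ j, 1 ≤ j → phi θ (X n) (X (n + 1)) j = ENNReal.ofReal (Q j)) (n : ℕ) :
    ∀ k, 1 ≤ k → Z k ≤ X n k := by
  induction n with
  | zero => exact hX0
  | succ n ih => exact hZ.le_of_phi_eq hθ hθπ (hX n) (hX (n + 1)) ih (hstep n)

end Comparison

section Barriers

variable {θ α C ρ : ℝ} {Q w : ℕ → ℝ} {L m : ℕ}

lemma isSupersolution_rpow_add (hθ : 0 < θ) (hθπ : θ < Real.pi) (hα : 1 < α)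
    (hD : Drift θ α = 1) (hQ : ∀ j : ℕ, 1 ≤ j → Q j ≤ j + C)
    (hL : Real.pi * C + θ ≤ L * (Real.pi - θ)) :
    IsSupersolution θ Q fun k => ((k : ℝ) + L) ^ α := by
  intro j hj
  have hjL : (0 : ℝ) < j + L := by positivity
  have hindex (k : ℕ) : ((k + 1 : ℕ) : ℝ) + L = ((k + (L + 1) : ℕ) : ℝ) := by push_cast; ring
  have hsum : Summable fun k : ℕ => Theta θ (((k + (L + 1) : ℕ) : ℝ) ^ α) (((j : ℝ) + L) ^ α) :=
    (summable_theta_rpow hθ hθπ hα hjL).comp_injective (add_left_injective (L + 1))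
  have hlower := sub_le_tsum_theta_rpow_add hθ hθπ hα hjL (L + 1)
  rw [hD] at hlower
  rw [phi_eq_ofReal hθ.le hθπ.le (Real.rpow_nonneg hjL.le α) (by simpa only [hindex] using hsum)]
  simp only [hindex]
  refine ENNReal.ofReal_le_ofReal ?_
  rw [one_div_mul_eq_div, le_div_iff₀ Real.pi_pos]
  refine le_trans ?_ hlower
  have hQπ := mul_le_mul_of_nonneg_right (hQ j hj) Real.pi_pos.le
  push_cast
  linarith

/-- The sequence `ρ ^ L, …, ρ ^ 2, ρ, 1, 2, 3, …`, indexed from `1`. For small `ρ`, its `α`-th power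
is the lower barrier: an initial segment of `L` widely separated terms makes up for the shift of the
main part by `L`. -/
noncomputable def geomShift (ρ : ℝ) (L k : ℕ) : ℝ :=
  if k ≤ L then ρ ^ (L + 1 - k) else (k : ℝ) - L

lemma geomShift_pos (hρ : 0 < ρ) (L k : ℕ) : 0 < geomShift ρ L k := by
  unfold geomShift
  split_ifs with hk
  · exact pow_pos hρ _
  · exact sub_pos.2 (Nat.cast_lt.2 (not_le.1 hk))

lemma geomShift_of_lt (ρ : ℝ) {k : ℕ} (hk : L < k) : geomShift ρ L k = (k : ℝ) - L :=
  if_neg hk.not_ge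

lemma geomShift_le (hρ : 0 ≤ ρ) (hρ1 : ρ ≤ 1) {k : ℕ} (hk : k ≤ L) : geomShift ρ L k ≤ ρ := by
  rw [geomShift, if_pos hk]
  exact pow_le_of_le_one hρ hρ1 (by omega)

lemma geomShift_le_mul (hρ : 0 ≤ ρ) (hρ1 : ρ ≤ 1) {j k : ℕ} (hjk : j < k) (hk : k ≤ L) :
    geomShift ρ L j ≤ ρ * geomShift ρ L k := by
  rw [geomShift, geomShift, if_pos (hjk.le.trans hk), if_pos hk, ← pow_succ']
  exact pow_le_pow_of_le_one hρ hρ1 (by omega)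

lemma sum_range_theta_le_of_le_mul (hθ : 0 < θ) (hθπ : θ < Real.pi) (hw : ∀ k, 0 < w k)
    (hρ : 0 ≤ ρ) (hm : m < L) (hgap : ∀ k, m < k → k < L → w m ≤ ρ * w k) :
    ∑ k ∈ Finset.range L, Theta θ (w k) (w m) ≤ (m + 1 / 2) * θ + L * (2 * Real.pi * ρ) := by
  have hbelow : ∑ k ∈ Finset.range m, Theta θ (w k) (w m) ≤ m * θ := by
    simpa using Finset.sum_le_card_nsmul (Finset.range m) _ θ fun k _ =>
      theta_le hθ hθπ (hw k).le (hw m)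
  have hdiag : Theta θ (w m) (w m) = θ / 2 := theta_self (by linarith) hθπ (hw m)
  have habove : ∑ k ∈ Finset.Ico (m + 1) L, Theta θ (w k) (w m) ≤
      ((L - (m + 1) : ℕ) : ℝ) * (2 * Real.pi * ρ) := by
    have hterm : ∀ k ∈ Finset.Ico (m + 1) L, Theta θ (w k) (w m) ≤ 2 * Real.pi * ρ := by
      intro k hk
      obtain ⟨hmk, hkL⟩ := Finset.mem_Ico.1 hk
      refine (le_abs_self _).trans ((abs_theta_le θ (hw k) (hw m).le).trans ?_)
      exact mul_le_mul_of_nonneg_left ((div_le_iff₀ (hw k)).2 (hgap k hmk hkL)) (by positivity)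
    simpa using Finset.sum_le_card_nsmul _ _ _ hterm
  have hcard : ((L - (m + 1) : ℕ) : ℝ) * (2 * Real.pi * ρ) ≤ L * (2 * Real.pi * ρ) :=
    mul_le_mul_of_nonneg_right (Nat.cast_le.2 (Nat.sub_le _ _)) (by positivity)
  rw [← Finset.sum_range_add_sum_Ico _ (Nat.succ_le_of_lt hm), Finset.sum_range_succ, hdiag]
  linarith

lemma geomShift_add_add_one (ρ : ℝ) (L k : ℕ) : geomShift ρ L (k + L + 1) = ((k + 1 : ℕ) : ℝ) := by
  rw [geomShift_of_lt ρ (by omega)]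
  push_cast
  ring

lemma summable_theta_geomShift (hθ : 0 < θ) (hθπ : θ < Real.pi) (hα : 1 < α) (ρ : ℝ) (L : ℕ)
    {c : ℝ} (hc : 0 < c) : Summable fun k : ℕ => Theta θ (geomShift ρ L (k + 1) ^ α) (c ^ α) := by
  rw [← summable_nat_add_iff L]
  simpa only [geomShift_add_add_one] using
    (summable_nat_add_iff 1).2 (summable_theta_rpow hθ hθπ hα hc)

lemma tsum_theta_geomShift_le (hθ : 0 < θ) (hθπ : θ < Real.pi) (hα : 1 < α) (ρ : ℝ) (L : ℕ)
    {c : ℝ} (hc : 0 < c) : ∑' k : ℕ, Theta θ (geomShift ρ L (k + 1) ^ α) (c ^ α) ≤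
      ∑ k ∈ Finset.range L, Theta θ (geomShift ρ L (k + 1) ^ α) (c ^ α)
        + c * Real.pi * Drift θ α := by
  rw [← (summable_theta_geomShift hθ hθπ hα ρ L hc).sum_add_tsum_nat_add L]
  simp only [geomShift_add_add_one]
  exact add_le_add_right (tsum_theta_rpow_add_one_le hθ hθπ hα hc) _

lemma sum_range_theta_geomShift_le (hθ : 0 < θ) (hθπ : θ < Real.pi) (hα : 1 ≤ α) (hρ : 0 < ρ)
    (hρ1 : ρ ≤ 1) {j : ℕ} (hj : 1 ≤ j) (hjL : j ≤ L) :
    ∑ k ∈ Finset.range L, Theta θ (geomShift ρ L (k + 1) ^ α) (geomShift ρ L j ^ α) ≤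
      (j - 1 / 2) * θ + L * (2 * Real.pi * ρ) := by
  obtain ⟨m, rfl⟩ := Nat.exists_eq_add_of_le' hj
  have hgap (k : ℕ) (hmk : m < k) (hkL : k < L) :
      geomShift ρ L (m + 1) ^ α ≤ ρ * geomShift ρ L (k + 1) ^ α :=
    calc geomShift ρ L (m + 1) ^ α ≤ (ρ * geomShift ρ L (k + 1)) ^ α :=
          Real.rpow_le_rpow (geomShift_pos hρ L _).le
            (geomShift_le_mul hρ.le hρ1 (by omega) (by omega)) (by linarith)
      _ = ρ ^ α * geomShift ρ L (k + 1) ^ α := Real.mul_rpow hρ.le (geomShift_pos hρ L _).le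
      _ ≤ ρ * geomShift ρ L (k + 1) ^ α :=
          mul_le_mul_of_nonneg_right (Real.rpow_le_self_of_le_one hρ.le hρ1 hα)
            (Real.rpow_nonneg (geomShift_pos hρ L _).le α)
  refine (sum_range_theta_le_of_le_mul (w := fun k => geomShift ρ L (k + 1) ^ α) hθ hθπ
    (fun k => Real.rpow_pos_of_pos (geomShift_pos hρ L _) α) hρ.le hjL hgap).trans_eq ?_
  push_cast
  ring

lemma isSubsolution_geomShift_rpow (hθ : 0 < θ) (hθπ : θ < Real.pi) (hα : 1 < α)
    (hD : Drift θ α = 1) (hQ : ∀ j : ℕ, 1 ≤ j → j - C ≤ Q j)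
    (hL : Real.pi * C ≤ L * (Real.pi - θ)) (hρ : 0 < ρ) (hρ1 : ρ ≤ 1)
    (hstart : ∀ j : ℕ, 1 ≤ j → j ≤ L →
      (j - 1 / 2) * θ + (2 * L + 1) * Real.pi * ρ ≤ Real.pi * Q j) :
    IsSubsolution θ Q fun k => geomShift ρ L k ^ α := by
  intro j hj
  have hpos := geomShift_pos hρ L
  have htsum := tsum_theta_geomShift_le hθ hθπ hα ρ L (hpos j)
  rw [hD, mul_one] at htsum
  refine (phi_eq_ofReal (X := fun k => geomShift ρ L k ^ α) (Y := fun k => geomShift ρ L k ^ α)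
    hθ.le hθπ.le (Real.rpow_nonneg (hpos j).le α)
    (summable_theta_geomShift hθ hθπ hα ρ L (hpos j))).trans_le (ENNReal.ofReal_le_ofReal ?_)
  rw [one_div_mul_eq_div, div_le_iff₀' Real.pi_pos]
  refine htsum.trans ?_
  rcases le_or_gt j L with hjL | hLj
  · have hhead := sum_range_theta_geomShift_le hθ hθπ hα.le hρ hρ1 hj hjL
    have hmain := mul_le_mul_of_nonneg_right (geomShift_le hρ.le hρ1 hjL) Real.pi_pos.le
    linarith [hstart j hj hjL]
  · have hhead : ∑ k ∈ Finset.range L, Theta θ (geomShift ρ L (k + 1) ^ α) (geomShift ρ L j ^ α) ≤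
        L * θ := by
      simpa using Finset.sum_le_card_nsmul (Finset.range L) _ θ fun k _ =>
        theta_le hθ hθπ (Real.rpow_nonneg (hpos _).le α) (Real.rpow_pos_of_pos (hpos j) α)
    have hQπ := mul_le_mul_of_nonneg_left (hQ j hj) Real.pi_pos.le
    rw [geomShift_of_lt ρ hLj] at hhead ⊢
    linarith

end Barriers

section Growth

variable {θ α η C : ℝ} {Q z : ℕ → ℝ}

lemma tendsto_log_mul_rpow_add_sub (α x : ℝ) {r : ℝ} (hr : 0 < r) :
    Tendsto (fun k : ℕ => Real.log (r * ((k : ℝ) + x) ^ α) - α * Real.log k) atTop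
      (𝓝 (Real.log r)) := by
  have hlim := (((Real.tendsto_log_comp_add_sub_log x).comp tendsto_natCast_atTop_atTop).const_mul
    α).const_add (Real.log r)
  rw [mul_zero, add_zero] at hlim
  refine hlim.congr' ?_
  filter_upwards [(tendsto_atTop_add_const_right _ x
    tendsto_natCast_atTop_atTop).eventually_gt_atTop 0] with k hk
  rw [Real.log_mul hr.ne' (Real.rpow_pos_of_pos hk α).ne', Real.log_rpow hk]
  simp only [Function.comp_apply]
  ring

lemma eventually_le_exp_mul_rpow (hz : ∀ᶠ k in atTop, 0 < z k)
    (hlim : Tendsto (fun k : ℕ => Real.log (z k) - α * Real.log k) atTop (𝓝 0)) (hη : 0 < η) :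
    ∀ᶠ k : ℕ in atTop, z k ≤ Real.exp η * (k : ℝ) ^ α := by
  filter_upwards [hz, hlim.eventually_lt_const hη, eventually_gt_atTop 0] with k hzk hk hk0
  have hk0 : (0 : ℝ) < k := Nat.cast_pos.2 hk0
  rw [Real.rpow_def_of_pos hk0, ← Real.exp_add, ← Real.log_le_iff_le_exp hzk]
  linarith

lemma eventually_exp_neg_mul_rpow_le (hz : ∀ᶠ k in atTop, 0 < z k)
    (hlim : Tendsto (fun k : ℕ => Real.log (z k) - α * Real.log k) atTop (𝓝 0)) (hη : 0 < η) :
    ∀ᶠ k : ℕ in atTop, Real.exp (-η) * (k : ℝ) ^ α ≤ z k := by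
  filter_upwards [hz, hlim.eventually_const_lt (neg_neg_of_pos hη), eventually_gt_atTop 0]
    with k hzk hk hk0
  have hk0 : (0 : ℝ) < k := Nat.cast_pos.2 hk0
  rw [Real.rpow_def_of_pos hk0, ← Real.exp_add, ← Real.le_log_iff_exp_le hzk]
  linarith

lemma exists_isSupersolution_ge (hθ : 0 < θ) (hθπ : θ < Real.pi) (hα : 1 < α)
    (hD : Drift θ α = 1) (hQ : ∀ j : ℕ, 1 ≤ j → Q j ≤ j + C) (hz : ∀ k, 1 ≤ k → 0 < z k)
    (hlim : Tendsto (fun k : ℕ => Real.log (z k) - α * Real.log k) atTop (𝓝 0)) (hη : 0 < η) :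
    ∃ Z, IsSupersolution θ Q Z ∧ (∀ k, 1 ≤ k → z k ≤ Z k) ∧
      Tendsto (fun k : ℕ => Real.log (Z k) - α * Real.log k) atTop (𝓝 η) := by
  have hα0 : 0 < α := by linarith
  obtain ⟨K, hK⟩ := eventually_atTop.1
    (eventually_le_exp_mul_rpow ((eventually_ge_atTop 1).mono hz) hlim hη)
  have hlarge : ∀ᶠ L : ℕ in atTop, Real.pi * C + θ ≤ L * (Real.pi - θ) :=
    (tendsto_natCast_atTop_atTop.atTop_mul_const (sub_pos.2 hθπ)).eventually_ge_atTop _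
  have hinit : ∀ᶠ L : ℕ in atTop, ∀ k ∈ Finset.range K, z k ≤ (L : ℝ) ^ α :=
    (Finset.eventually_all _).2 fun k _ =>
      ((tendsto_rpow_atTop hα0).comp tendsto_natCast_atTop_atTop).eventually_ge_atTop (z k)
  obtain ⟨L, hL, hzL⟩ := (hlarge.and hinit).exists
  refine ⟨fun k => Real.exp η * ((k : ℝ) + L) ^ α,
    (isSupersolution_rpow_add hθ hθπ hα hD hQ hL).const_mul (Real.exp_pos η), fun k _ => ?_, ?_⟩
  · rcases lt_or_ge k K with hkK | hKk
    · calc z k ≤ (L : ℝ) ^ α := hzL k (Finset.mem_range.2 hkK)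
        _ ≤ ((k : ℝ) + L) ^ α :=
          Real.rpow_le_rpow L.cast_nonneg (le_add_of_nonneg_left k.cast_nonneg) hα0.le
        _ ≤ Real.exp η * ((k : ℝ) + L) ^ α :=
          le_mul_of_one_le_left (by positivity) (Real.one_le_exp hη.le)
    · refine (hK k hKk).trans (mul_le_mul_of_nonneg_left ?_ (Real.exp_pos η).le)
      exact Real.rpow_le_rpow k.cast_nonneg (le_add_of_nonneg_right L.cast_nonneg) hα0.le
  · simpa only [Real.log_exp] using tendsto_log_mul_rpow_add_sub α L (Real.exp_pos η)

lemma exists_ratio_le_of_lt (hQ : ∀ j : ℕ, 1 ≤ j → ((j : ℝ) - 1 / 2) * θ / Real.pi < Q j)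
    (hz : ∀ k, 1 ≤ k → 0 < z k) (L : ℕ) :
    ∃ ρ, 0 < ρ ∧ ρ < 1 ∧ ∀ k, 1 ≤ k → k ≤ L → ρ ≤ z k ∧
      ((k : ℝ) - 1 / 2) * θ + (2 * L + 1) * Real.pi * ρ ≤ Real.pi * Q k := by
  have hunit : ∀ᶠ ρ : ℝ in 𝓝[>] 0, ρ ∈ Set.Ioo (0 : ℝ) 1 := Ioo_mem_nhdsGT one_pos
  have hsmall : ∀ᶠ ρ : ℝ in 𝓝[>] 0, ∀ k ∈ Finset.Icc 1 L, ρ ≤ z k ∧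
      ((k : ℝ) - 1 / 2) * θ + (2 * L + 1) * Real.pi * ρ ≤ Real.pi * Q k := by
    refine (Finset.eventually_all _).2 fun k hk => nhdsWithin_le_nhds ?_
    have hk1 := (Finset.mem_Icc.1 hk).1
    have hcont : Continuous fun ρ : ℝ => ((k : ℝ) - 1 / 2) * θ + (2 * L + 1) * Real.pi * ρ := by
      fun_prop
    have hlim := hcont.tendsto 0
    rw [mul_zero, add_zero] at hlim
    exact (eventually_le_nhds (hz k hk1)).and
      (hlim.eventually_le_const ((div_lt_iff₀' Real.pi_pos).1 (hQ k hk1)))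
  obtain ⟨ρ, ⟨hρ, hρ1⟩, hρL⟩ := (hunit.and hsmall).exists
  exact ⟨ρ, hρ, hρ1, fun k hk hkL => hρL k (Finset.mem_Icc.2 ⟨hk, hkL⟩)⟩

lemma exists_isSubsolution_le (hθ : 0 < θ) (hθπ : θ < Real.pi) (hα : 1 < α)
    (hD : Drift θ α = 1) (hQ : ∀ j : ℕ, 1 ≤ j → j - C ≤ Q j)
    (hQ' : ∀ j : ℕ, 1 ≤ j → ((j : ℝ) - 1 / 2) * θ / Real.pi < Q j) (hz : ∀ k, 1 ≤ k → 0 < z k)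
    (hlim : Tendsto (fun k : ℕ => Real.log (z k) - α * Real.log k) atTop (𝓝 0)) (hη : 0 < η) :
    ∃ Z, IsSubsolution θ Q Z ∧ (∀ k, 0 < Z k) ∧ (∀ k, 1 ≤ k → Z k ≤ z k) ∧
      Tendsto (fun k : ℕ => Real.log (Z k) - α * Real.log k) atTop (𝓝 (-η)) := by
  have hα0 : 0 < α := by linarith
  have hlarge : ∀ᶠ L : ℕ in atTop, Real.pi * C ≤ L * (Real.pi - θ) :=
    (tendsto_natCast_atTop_atTop.atTop_mul_const (sub_pos.2 hθπ)).eventually_ge_atTop _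
  obtain ⟨L, hL, hzL⟩ := (hlarge.and (eventually_forall_ge_atTop.2
    (eventually_exp_neg_mul_rpow_le ((eventually_ge_atTop 1).mono hz) hlim hη))).exists
  obtain ⟨ρ, hρ, hρ1, hstart⟩ := exists_ratio_le_of_lt hQ' hz L
  have hpos (k : ℕ) : 0 < geomShift ρ L k ^ α := Real.rpow_pos_of_pos (geomShift_pos hρ L k) α
  refine ⟨fun k => Real.exp (-η) * geomShift ρ L k ^ α,
    (isSubsolution_geomShift_rpow hθ hθπ hα hD hQ hL hρ hρ1.le
      fun j hj hjL => (hstart j hj hjL).2).const_mul (Real.exp_pos (-η)),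
    fun k => mul_pos (Real.exp_pos (-η)) (hpos k), fun k hk => ?_, ?_⟩
  · rcases le_or_gt k L with hkL | hLk
    · calc Real.exp (-η) * geomShift ρ L k ^ α ≤ geomShift ρ L k ^ α :=
            mul_le_of_le_one_left (hpos k).le (Real.exp_le_one_iff.2 (neg_nonpos.2 hη.le))
        _ ≤ ρ ^ α :=
            Real.rpow_le_rpow (geomShift_pos hρ L k).le (geomShift_le hρ.le hρ1.le hkL) hα0.le
        _ ≤ ρ := Real.rpow_le_self_of_le_one hρ.le hρ1.le hα.le
        _ ≤ z k := (hstart k hk hkL).1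
    · refine (mul_le_mul_of_nonneg_left ?_ (Real.exp_pos (-η)).le).trans (hzL k hLk.le)
      refine Real.rpow_le_rpow (geomShift_pos hρ L k).le ?_ hα0.le
      rw [geomShift_of_lt ρ hLk]
      exact sub_le_self _ L.cast_nonneg
  · have hgrowth := tendsto_log_mul_rpow_add_sub α (-L) (Real.exp_pos (-η))
    rw [Real.log_exp] at hgrowth
    refine hgrowth.congr' ((eventually_gt_atTop L).mono fun k hk => ?_)
    simp only [geomShift_of_lt ρ hk, sub_eq_add_neg]

end Growth

section Envelope

variable {ι κ : Type*} {l : Filter κ} {z g : κ → ℝ} {U : ι → κ → ℝ}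

lemma tendsto_log_iInf_sub (hz : ∀ᶠ k in l, 0 < z k) (hzU : ∀ᶠ k in l, ∀ i, z k ≤ U i k)
    (hlim : Tendsto (fun k => Real.log (z k) - g k) l (𝓝 0))
    (hU : ∀ η, 0 < η → ∃ i, Tendsto (fun k => Real.log (U i k) - g k) l (𝓝 η)) :
    Tendsto (fun k => Real.log (⨅ i, U i k) - g k) l (𝓝 0) := by
  have : Nonempty ι := ⟨(hU 1 one_pos).choose⟩
  refine tendsto_order.2 ⟨fun a ha => ?_, fun a ha => ?_⟩
  · filter_upwards [hz, hzU, hlim.eventually_const_lt ha] with k hzk hzUk hk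
    exact hk.trans_le (sub_le_sub_right (Real.log_le_log hzk (le_ciInf hzUk)) _)
  · obtain ⟨i, hi⟩ := hU (a / 2) (half_pos ha)
    filter_upwards [hz, hzU, hi.eventually_lt_const (half_lt_self ha)] with k hzk hzUk hk
    have hbdd : BddBelow (Set.range fun i => U i k) := ⟨z k, Set.forall_mem_range.2 hzUk⟩
    exact (sub_le_sub_right (Real.log_le_log (hzk.trans_le (le_ciInf hzUk))
      (ciInf_le hbdd i)) _).trans_lt hk

lemma tendsto_log_iSup_sub (hU0 : ∀ᶠ k in l, ∀ i, 0 < U i k) (hUz : ∀ᶠ k in l, ∀ i, U i k ≤ z k)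
    (hlim : Tendsto (fun k => Real.log (z k) - g k) l (𝓝 0))
    (hU : ∀ η, 0 < η → ∃ i, Tendsto (fun k => Real.log (U i k) - g k) l (𝓝 (-η))) :
    Tendsto (fun k => Real.log (⨆ i, U i k) - g k) l (𝓝 0) := by
  have : Nonempty ι := ⟨(hU 1 one_pos).choose⟩
  have hbdd {k : κ} (hk : ∀ i, U i k ≤ z k) : BddAbove (Set.range fun i => U i k) :=
    ⟨z k, Set.forall_mem_range.2 hk⟩
  refine tendsto_order.2 ⟨fun a ha => ?_, fun a ha => ?_⟩
  · obtain ⟨i, hi⟩ := hU (-a / 2) (by linarith)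
    filter_upwards [hU0, hUz, hi.eventually_const_lt (show a < -(-a / 2) by linarith)]
      with k hU0k hUzk hk
    exact hk.trans_le (sub_le_sub_right (Real.log_le_log (hU0k i) (le_ciSup (hbdd hUzk) i)) _)
  · filter_upwards [hU0, hUz, hlim.eventually_lt_const ha] with k hU0k hUzk hk
    have hpos : 0 < ⨆ i, U i k :=
      (hU0k (Classical.arbitrary ι)).trans_le (le_ciSup (hbdd hUzk) _)
    exact (sub_le_sub_right (Real.log_le_log hpos (ciSup_le hUzk)) _).trans_lt hk

end Envelope

section Orbit

variable {θ α C : ℝ} {Q z : ℕ → ℝ}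

lemma exists_upper_envelope (hθ : 0 < θ) (hθπ : θ < Real.pi) (hα : 1 < α) (hD : Drift θ α = 1)
    (hQ : ∀ j : ℕ, 1 ≤ j → Q j ≤ j + C) (hz : ∀ k, 1 ≤ k → 0 < z k)
    (hlim : Tendsto (fun k : ℕ => Real.log (z k) - α * Real.log k) atTop (𝓝 0)) :
    ∃ Z : ℕ → ℝ, (∀ k, 1 ≤ k → z k ≤ Z k) ∧
      Tendsto (fun k : ℕ => Real.log (Z k) - α * Real.log k) atTop (𝓝 0) ∧
      ∀ X : ℕ → ℕ → ℝ, (∀ n, ∀ k, 1 ≤ k → 0 < X n k) → (∀ k, 1 ≤ k → X 0 k ≤ z k) →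
        (∀ n, ∀ j, 1 ≤ j → phi θ (X n) (X (n + 1)) j = ENNReal.ofReal (Q j)) →
        ∀ n, ∀ k, 1 ≤ k → X n k ≤ Z k := by
  let S : Set (ℕ → ℝ) := {Z | IsSupersolution θ Q Z ∧ ∀ k, 1 ≤ k → z k ≤ Z k}
  have hS (η : ℝ) (hη : 0 < η) :
      ∃ Z : S, Tendsto (fun k : ℕ => Real.log (Z.1 k) - α * Real.log k) atTop (𝓝 η) := by
    obtain ⟨Z, hZ, hzZ, hZlim⟩ := exists_isSupersolution_ge hθ hθπ hα hD hQ hz hlim hη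
    exact ⟨⟨Z, hZ, hzZ⟩, hZlim⟩
  have : Nonempty S := ⟨(hS 1 one_pos).choose⟩
  have h1 : ∀ᶠ k : ℕ in atTop, 1 ≤ k := eventually_ge_atTop 1
  refine ⟨fun k => ⨅ Z : S, Z.1 k, fun k hk => le_ciInf fun Z => Z.2.2 k hk,
    tendsto_log_iInf_sub (h1.mono hz) (h1.mono fun k hk Z => Z.2.2 k hk) hlim hS, ?_⟩
  exact fun X hX hX0 hstep n k hk => le_ciInf fun Z =>
    Z.2.1.orbit_le hθ hθπ hX (fun k hk => (hX0 k hk).trans (Z.2.2 k hk)) hstep n k hk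

lemma exists_lower_envelope (hθ : 0 < θ) (hθπ : θ < Real.pi) (hα : 1 < α) (hD : Drift θ α = 1)
    (hQ : ∀ j : ℕ, 1 ≤ j → j - C ≤ Q j)
    (hQ' : ∀ j : ℕ, 1 ≤ j → ((j : ℝ) - 1 / 2) * θ / Real.pi < Q j) (hz : ∀ k, 1 ≤ k → 0 < z k)
    (hlim : Tendsto (fun k : ℕ => Real.log (z k) - α * Real.log k) atTop (𝓝 0)) :
    ∃ Z : ℕ → ℝ, (∀ k, 1 ≤ k → 0 < Z k) ∧ (∀ k, 1 ≤ k → Z k ≤ z k) ∧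
      Tendsto (fun k : ℕ => Real.log (Z k) - α * Real.log k) atTop (𝓝 0) ∧
      ∀ X : ℕ → ℕ → ℝ, (∀ n, ∀ k, 1 ≤ k → 0 < X n k) → (∀ k, 1 ≤ k → z k ≤ X 0 k) →
        (∀ n, ∀ j, 1 ≤ j → phi θ (X n) (X (n + 1)) j = ENNReal.ofReal (Q j)) →
        ∀ n, ∀ k, 1 ≤ k → Z k ≤ X n k := by
  let S : Set (ℕ → ℝ) :=
    {Z | IsSubsolution θ Q Z ∧ (∀ k, 0 < Z k) ∧ ∀ k, 1 ≤ k → Z k ≤ z k}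
  have hS (η : ℝ) (hη : 0 < η) :
      ∃ Z : S, Tendsto (fun k : ℕ => Real.log (Z.1 k) - α * Real.log k) atTop (𝓝 (-η)) := by
    obtain ⟨Z, hZ, hZ0, hZz, hZlim⟩ := exists_isSubsolution_le hθ hθπ hα hD hQ hQ' hz hlim hη
    exact ⟨⟨Z, hZ, hZ0, hZz⟩, hZlim⟩
  have hne : Nonempty S := ⟨(hS 1 one_pos).choose⟩
  have h1 : ∀ᶠ k : ℕ in atTop, 1 ≤ k := eventually_ge_atTop 1
  refine ⟨fun k => ⨆ Z : S, Z.1 k, fun k hk => ?_, fun k hk => ciSup_le fun Z => Z.2.2.2 k hk,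
    tendsto_log_iSup_sub (.of_forall fun k Z => Z.2.2.1 k) (h1.mono fun k hk Z => Z.2.2.2 k hk)
      hlim hS, ?_⟩
  · have hbdd : BddAbove (Set.range fun Z : S => Z.1 k) :=
      ⟨z k, Set.forall_mem_range.2 fun Z => Z.2.2.2 k hk⟩
    exact (hne.some.2.2.1 k).trans_le (le_ciSup hbdd hne.some)
  · exact fun X hX hX0 hstep n k hk => ciSup_le fun Z =>
      Z.2.1.le_orbit hθ hθπ hX (fun k hk => (Z.2.2.2 k hk).trans (hX0 k hk)) hstep n k hk

end Orbit

theorem stmt_15 (θ : ℝ) (hθ : 0 < θ) (hθπ : θ < Real.pi)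
    (Q : ℕ → ℝ) (hQpos : ∀ k, 1 ≤ k → 0 < Q k)
    (hQ : (fun k : ℕ => Q k - (k : ℝ)) =O[atTop] fun _ : ℕ => (1 : ℝ))
    (hQ' : ∀ k : ℕ, 1 ≤ k → ((k : ℝ) - 1 / 2) * θ / Real.pi < Q k)
    (Zlo Zhi : ℕ → ℝ) (hZlopos : ∀ k, 1 ≤ k → 0 < Zlo k)
    (hZle : ∀ k, 1 ≤ k → Zlo k ≤ Zhi k)
    (hZlo : (fun k : ℕ => Real.log (Zlo k) - (1 + θ / Real.pi) * Real.log k)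
      =o[atTop] fun _ : ℕ => (1 : ℝ))
    (hZhi : (fun k : ℕ => Real.log (Zhi k) - (1 + θ / Real.pi) * Real.log k)
      =o[atTop] fun _ : ℕ => (1 : ℝ)) :
    ∃ Zlo' Zhi' : ℕ → ℝ, (∀ k, 1 ≤ k → 0 < Zlo' k) ∧ (∀ k, 1 ≤ k → Zlo' k ≤ Zhi' k) ∧
      ((fun k : ℕ => Real.log (Zlo' k) - (1 + θ / Real.pi) * Real.log k)
        =o[atTop] fun _ : ℕ => (1 : ℝ)) ∧
      ((fun k : ℕ => Real.log (Zhi' k) - (1 + θ / Real.pi) * Real.log k)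
        =o[atTop] fun _ : ℕ => (1 : ℝ)) ∧
      ∀ X : ℕ → ℕ → ℝ, (∀ n, ∀ k, 1 ≤ k → 0 < X n k) →
        (∀ k, 1 ≤ k → Zlo k ≤ X 0 k ∧ X 0 k ≤ Zhi k) →
        (∀ n : ℕ, ∀ j, 1 ≤ j → phi θ (X n) (X (n + 1)) j = ENNReal.ofReal (Q j)) →
        ∀ n : ℕ, ∀ k, 1 ≤ k → Zlo' k ≤ X n k ∧ X n k ≤ Zhi' k := by
  have hα : 1 < 1 + θ / Real.pi := lt_add_of_pos_right 1 (div_pos hθ Real.pi_pos)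
  have hD := drift_one_add_div_pi hθ hθπ
  obtain ⟨C, hC⟩ := isBigO_one_nat_atTop_iff.1 hQ
  have hQhi (j : ℕ) (_ : 1 ≤ j) : Q j ≤ j + C := by linarith [(abs_le.1 (hC j)).2]
  have hQlo (j : ℕ) (_ : 1 ≤ j) : j - C ≤ Q j := by linarith [(abs_le.1 (hC j)).1]
  have hZhipos (k : ℕ) (hk : 1 ≤ k) : 0 < Zhi k := (hZlopos k hk).trans_le (hZle k hk)
  rw [isLittleO_one_iff] at hZlo hZhi
  obtain ⟨Zlo', hZlopos', hZlole, hZlolim, hlo⟩ :=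
    exists_lower_envelope hθ hθπ hα hD hQlo hQ' hZlopos hZlo
  obtain ⟨Zhi', hZhile, hZhilim, hhi⟩ := exists_upper_envelope hθ hθπ hα hD hQhi hZhipos hZhi
  refine ⟨Zlo', Zhi', hZlopos', fun k hk => (hZlole k hk).trans ((hZle k hk).trans (hZhile k hk)),
    (isLittleO_one_iff ℝ).2 hZlolim, (isLittleO_one_iff ℝ).2 hZhilim, ?_⟩
  exact fun X hX hX0 hstep n k hk =>
    ⟨hlo X hX (fun k hk => (hX0 k hk).1) hstep n k hk,
      hhi X hX (fun k hk => (hX0 k hk).2) hstep n k hk⟩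
end
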